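/- arXiv:1402.6134 — 2 statements merged into one kernel-verified Lean document; each statement's English description precedes it below -/
import Mathlib

section
/- Let n ≥ 1, 1 < p < ∞ and β < p − 1, and let Ω ⊆ ℝⁿ be an open set whose complement Ω^c is nonempty and unbounded. Assume that the upper Assouad codimension of Ω^c is less than p − β, i.e. there exist 0 ≤ s < p − β and c₀ > 0 such that |(Ω^c)_r ∩ B(x,R)| ≥ c₀ (r/R)^s |B(x,R)| for every x ∈ Ω^c and all 0 < r < R < ∞. Then Ω admits a (p,β)-Hardy inequality: there exists C > 0 such that ∫_Ω |u(x)|^p d_Ω(x)^{β−p} dx ≤ C ∫_Ω ‖∇u(x)‖^p d_Ω(x)^β dx for every Lipschitz function u : ℝⁿ → ℝ with compact support contained in Ω. -/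
open MeasureTheory Metric ENNReal

/-!
Write `d` for the distance to `Ωᶜ` and `N` for the dimension. For `p = 1`, where the assumptions
read `β < 0` and `s < γ := 1 - β`, compare `v x` with the values of `v` at the points near `x`
whose distance to `Ωᶜ` is below `ε d(x)`; by the codimension bound they have measure at least of
order `ε ^ s d(x) ^ N`. Averaging over them and integrating against `d ^ (-γ)` bounds
`ε ^ s ∫ |v| d ^ (-γ)` by two terms. Tonelli's theorem and the scaling
`∫ (t + ‖z‖) ^ (-r) dz = c t ^ (N - r)` turn the average of `|v|` into at most
`K ε ^ γ ∫ |v| d ^ (-γ)`, which is absorbed for small `ε` because `s < γ`. The average of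
`|v y - v x|` is controlled by `∫ ‖∇v‖ d ^ (1 - γ)`, by integrating `∇v` along segments; here the
kernel has exponent `r = N + γ - 1`, and its integral converges because `β < 0`. The case `p > 1`
follows by applying the `(1, β - p + 1)`-inequality to `|u| ^ p` and using Young's inequality.
-/

open Module (finrank)
open scoped Topology

section Preliminaries

lemma rpow_neg_le_of_le_mul {a b m r : ℝ} (hr : 0 ≤ r) (hm : 0 < m) (hb : 0 < b)
    (h : b ≤ m * a) : a ^ (-r) ≤ m ^ r * b ^ (-r) := by
  have ha : 0 < a := pos_of_mul_pos_right (hb.trans_le h) hm.le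
  calc a ^ (-r) = m ^ r * (m * a) ^ (-r) := by
        rw [Real.mul_rpow hm.le ha.le, ← mul_assoc, ← Real.rpow_add hm, add_neg_cancel,
          Real.rpow_zero, one_mul]
    _ ≤ m ^ r * b ^ (-r) :=
        mul_le_mul_of_nonneg_left (Real.rpow_le_rpow_of_nonpos hb h (neg_nonpos.2 hr))
          (by positivity)

lemma mul_rpow_sub_mul_rpow_le {p q a t g : ℝ} (hq : 0 < q) (hqp : q ≤ p) (ha : 0 ≤ a)
    (ht : 0 ≤ t) (hg : 0 ≤ g) :
    a * (t ^ (p - q) * g ^ q) ≤ t ^ p + a ^ (p / q) * g ^ p := by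
  have hp : 0 < p := hq.trans_le hqp
  have hθ : 0 ≤ (p - q) / p := div_nonneg (sub_nonneg.2 hqp) hp.le
  have hθ' : 0 ≤ q / p := (div_pos hq hp).le
  have hsum : (p - q) / p + q / p = 1 := by field_simp; ring
  have hy : 0 ≤ a ^ (p / q) * g ^ p := by positivity
  calc a * (t ^ (p - q) * g ^ q)
      = (t ^ p) ^ ((p - q) / p) * (a ^ (p / q) * g ^ p) ^ (q / p) := by
        rw [Real.mul_rpow (by positivity) (by positivity), ← Real.rpow_mul ht, ← Real.rpow_mul ha,
          ← Real.rpow_mul hg, mul_div_cancel₀ _ hp.ne', mul_div_cancel₀ _ hp.ne',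
          div_mul_div_cancel₀ hq.ne', div_self hp.ne', Real.rpow_one]
        ring
    _ ≤ (p - q) / p * t ^ p + q / p * (a ^ (p / q) * g ^ p) :=
        Real.geom_mean_le_arith_mean2_weighted hθ hθ' (by positivity) hy hsum
    _ ≤ t ^ p + a ^ (p / q) * g ^ p :=
        add_le_add (mul_le_of_le_one_left (by positivity) (by linarith))
          (mul_le_of_le_one_left hy (by linarith))

lemma mul_le_two_mul_of_mul_le_mul_add {F G a k m : ℝ≥0∞} (hmF : m * F ≠ ∞) (ha : 2 * a ≤ m)
    (h : m * F ≤ a * F + k * G) : m * F ≤ 2 * (k * G) := by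
  refine (ENNReal.add_le_add_iff_left hmF).1 ?_
  calc m * F + m * F = 2 * (m * F) := (two_mul _).symm
    _ ≤ 2 * (a * F + k * G) := by gcongr
    _ = 2 * a * F + 2 * (k * G) := by ring
    _ ≤ m * F + 2 * (k * G) := by gcongr

lemma exists_mul_rpow_le_mul_rpow {K m : ℝ≥0∞} {s γ : ℝ} (hK : K ≠ ∞) (hm : m ≠ 0)
    (hs : s < γ) :
    ∃ ε : ℝ, 0 < ε ∧ ε < 1 ∧ K * ENNReal.ofReal (ε ^ γ) ≤ m * ENNReal.ofReal (ε ^ s) := by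
  have hlim : Filter.Tendsto (fun ε : ℝ => K * ENNReal.ofReal (ε ^ (γ - s))) (𝓝[>] 0) (𝓝 0) := by
    have hrpow : Filter.Tendsto (fun ε : ℝ => ε ^ (γ - s)) (𝓝[>] 0) (𝓝 0) := by
      have h := (Real.continuousAt_rpow_const 0 (γ - s) (.inr (sub_pos.2 hs).le)).tendsto
      rw [Real.zero_rpow (sub_pos.2 hs).ne'] at h
      exact h.mono_left nhdsWithin_le_nhds
    simpa using ENNReal.Tendsto.const_mul (ENNReal.tendsto_ofReal hrpow) (.inr hK)
  obtain ⟨ε, hεm, hε0, hε1⟩ := ((hlim.eventually_lt_const (pos_iff_ne_zero.2 hm)).and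
    (Ioo_mem_nhdsGT zero_lt_one)).exists
  refine ⟨ε, hε0, hε1, ?_⟩
  calc K * ENNReal.ofReal (ε ^ γ)
      = K * ENNReal.ofReal (ε ^ (γ - s)) * ENNReal.ofReal (ε ^ s) := by
        rw [mul_assoc, ← ENNReal.ofReal_mul (by positivity), ← Real.rpow_add hε0, sub_add_cancel]
    _ ≤ m * ENNReal.ofReal (ε ^ s) := by gcongr

lemma infDist_compl_pos {X : Type*} [PseudoMetricSpace X] {Ω : Set X} (hΩ : IsOpen Ω)
    (hΩc : Ωᶜ.Nonempty) {x : X} (hx : x ∈ Ω) : 0 < infDist x Ωᶜ :=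
  (hΩ.isClosed_compl.notMem_iff_infDist_pos hΩc).1 (Set.notMem_compl_iff.2 hx)

end Preliminaries

section AbsRpow

lemma norm_fderiv_abs_rpow {E : Type*} [NormedAddCommGroup E] [NormedSpace ℝ E] {u : E → ℝ}
    {θ : ℝ} {x : E} (hθ : 1 < θ) (hu : DifferentiableAt ℝ u x) :
    ‖fderiv ℝ (fun y => |u y| ^ θ) x‖ = θ * |u x| ^ (θ - 1) * ‖fderiv ℝ u x‖ := by
  have hcomp : fderiv ℝ (fun y => |u y| ^ θ) x =
      deriv (fun t : ℝ => ‖t‖ ^ θ) (u x) • fderiv ℝ u x :=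
    ((differentiable_norm_rpow hθ (u x)).hasDerivAt.comp_hasFDerivAt x hu.hasFDerivAt).fderiv
  rw [hcomp, norm_smul, norm_deriv_eq_norm_fderiv, norm_fderiv_norm_id_rpow (u x) hθ,
    Real.norm_eq_abs]

lemma exists_lipschitzWith_abs_rpow {X : Type*} [PseudoMetricSpace X] {u : X → ℝ} {θ : ℝ}
    (hθ : 1 < θ) (hu : ∃ L, LipschitzWith L u) (huc : HasCompactSupport u) :
    ∃ L, LipschitzWith L (fun x => |u x| ^ θ) := by
  obtain ⟨L, hL⟩ := hu
  obtain ⟨M, hM⟩ := huc.exists_bound_of_continuous hL.continuous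
  obtain ⟨K, hK⟩ :=
    (contDiff_norm_rpow (E := ℝ) hθ).locallyLipschitz.locallyLipschitzOn
      |>.exists_lipschitzOnWith_of_compact (isCompact_closedBall 0 M)
  have hmaps : Set.MapsTo u Set.univ (closedBall 0 M) := fun x _ =>
    mem_closedBall_zero_iff.2 (hM x)
  exact ⟨K * L, lipschitzOnWith_univ.1 (hK.comp hL.lipschitzOnWith hmaps)⟩

end AbsRpow

section Segment

variable {E : Type*} [NormedAddCommGroup E] [NormedSpace ℝ E] [FiniteDimensional ℝ E]
  [MeasurableSpace E] [BorelSpace E] {μ : Measure E} [μ.IsAddHaarMeasure]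
  {v : E → ℝ} {L : NNReal}

lemma ae_ae_differentiableAt_add_smul (hv : LipschitzWith L v) (h : E) :
    ∀ᵐ x ∂μ, ∀ᵐ τ : ℝ, DifferentiableAt ℝ v (x + τ • h) := by
  have hmeas : MeasurableSet {q : ℝ × E | DifferentiableAt ℝ v (q.2 + q.1 • h)} :=
    (by fun_prop : Measurable fun q : ℝ × E => q.2 + q.1 • h)
      (measurableSet_of_differentiableAt ℝ v)
  refine (Measure.ae_ae_comm (μ := volume) (ν := μ) hmeas).1 (.of_forall fun τ => ?_)
  exact (measurePreserving_add_right μ (τ • h)).quasiMeasurePreserving.ae hv.ae_differentiableAt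

lemma ae_enorm_sub_le_lintegral_fderiv (hv : LipschitzWith L v) (h : E) :
    ∀ᵐ x ∂μ, ‖v (x + h) - v x‖ₑ ≤
      ∫⁻ τ in Set.Ioc (0 : ℝ) 1, ‖fderiv ℝ v (x + τ • h)‖ₑ * ‖h‖ₑ := by
  filter_upwards [ae_ae_differentiableAt_add_smul hv h] with x hx
  have hlip : LipschitzWith (L * ‖h‖₊) (fun τ : ℝ => v (x + τ • h)) := by
    refine hv.comp (LipschitzWith.of_dist_le_mul fun σ τ => ?_)
    rw [dist_add_left, dist_eq_norm, ← sub_smul, norm_smul, dist_eq_norm, mul_comm, coe_nnnorm]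
  have hderiv : ∀ τ : ℝ, DifferentiableAt ℝ v (x + τ • h) →
      deriv (fun τ : ℝ => v (x + τ • h)) τ = fderiv ℝ v (x + τ • h) h := fun τ hτ =>
    (hτ.hasFDerivAt.comp_hasDerivAt τ
      (by simpa using ((hasDerivAt_id τ).smul_const h).const_add x)).deriv
  have hftc : v (x + h) - v x = ∫ τ in Set.Ioc (0 : ℝ) 1, deriv (fun τ : ℝ => v (x + τ • h)) τ := by
    have hac := (hlip.lipschitzOnWith (s := Set.uIcc 0 1)).absolutelyContinuousOnInterval
    simpa [intervalIntegral.integral_of_le zero_le_one] using hac.integral_deriv_eq_sub.symm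
  calc ‖v (x + h) - v x‖ₑ
      ≤ ∫⁻ τ in Set.Ioc (0 : ℝ) 1, ‖deriv (fun τ : ℝ => v (x + τ • h)) τ‖ₑ :=
        hftc ▸ enorm_integral_le_lintegral_enorm _
    _ ≤ ∫⁻ τ in Set.Ioc (0 : ℝ) 1, ‖fderiv ℝ v (x + τ • h)‖ₑ * ‖h‖ₑ := by
        refine lintegral_mono_ae (ae_restrict_of_ae (hx.mono fun τ hτ => ?_))
        rw [hderiv τ hτ]
        exact ContinuousLinearMap.le_opENorm _ _

lemma setLIntegral_mul_enorm_sub_le {s : Set E} {w ψ : E → ℝ≥0∞} (hv : LipschitzWith L v)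
    (hs : MeasurableSet s) (hψ : Measurable ψ) (h : E)
    (hwψ : ∀ x ∈ s, ∀ τ ∈ Set.Ioc (0 : ℝ) 1,
      w x * (‖fderiv ℝ v (x + τ • h)‖ₑ * ‖h‖ₑ) ≤ ψ (x + τ • h)) :
    ∫⁻ x in s, w x * ‖v (x + h) - v x‖ₑ ∂μ ≤ ∫⁻ z, ψ z ∂μ := by
  calc ∫⁻ x in s, w x * ‖v (x + h) - v x‖ₑ ∂μ
      ≤ ∫⁻ x in s, w x * (∫⁻ τ in Set.Ioc (0 : ℝ) 1, ‖fderiv ℝ v (x + τ • h)‖ₑ * ‖h‖ₑ) ∂μ :=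
        lintegral_mono_ae <| ae_restrict_of_ae <|
          (ae_enorm_sub_le_lintegral_fderiv hv h).mono fun x hx => mul_le_mul_right hx _
    _ ≤ ∫⁻ x in s, (∫⁻ τ in Set.Ioc (0 : ℝ) 1, ψ (x + τ • h)) ∂μ := by
        refine setLIntegral_mono' hs fun x hx => ?_
        rw [← lintegral_const_mul _ (by fun_prop)]
        exact setLIntegral_mono' measurableSet_Ioc (hwψ x hx)
    _ ≤ ∫⁻ x, (∫⁻ τ in Set.Ioc (0 : ℝ) 1, ψ (x + τ • h)) ∂μ := setLIntegral_le_lintegral _ _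
    _ = ∫⁻ τ in Set.Ioc (0 : ℝ) 1, (∫⁻ x, ψ (x + τ • h) ∂μ) :=
        lintegral_lintegral_swap (by fun_prop)
    _ = ∫⁻ z, ψ z ∂μ := by simp [lintegral_add_right_eq_self ψ]

end Segment

section JapaneseBracket

variable {E : Type*} [NormedAddCommGroup E] [MeasurableSpace E]

/-- The integral of the power `(1 + ‖z‖) ^ (-r)` of the Japanese bracket. It is finite when `r`
exceeds the dimension, and enters the constants of the Hardy inequality. -/
noncomputable def bracketMass (μ : Measure E) (r : ℝ) : ℝ≥0∞ :=
  ∫⁻ z, ENNReal.ofReal ((1 + ‖z‖) ^ (-r)) ∂μ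

variable [NormedSpace ℝ E] [FiniteDimensional ℝ E] [BorelSpace E] (μ : Measure E)
  [μ.IsAddHaarMeasure]

lemma bracketMass_ne_top {r : ℝ} (hr : finrank ℝ E < r) : bracketMass μ r ≠ ∞ :=
  (finite_integral_one_add_norm hr).ne

lemma lintegral_add_norm_rpow_neg (r : ℝ) {t : ℝ} (ht : 0 < t) :
    ∫⁻ z, ENNReal.ofReal ((t + ‖z‖) ^ (-r)) ∂μ =
      ENNReal.ofReal (t ^ (finrank ℝ E - r)) * bracketMass μ r := by
  have hfactor (z : E) : ENNReal.ofReal ((t + ‖z‖) ^ (-r)) =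
      ENNReal.ofReal (t ^ (-r)) * ENNReal.ofReal ((1 + ‖t⁻¹ • z‖) ^ (-r)) := by
    rw [← ENNReal.ofReal_mul (by positivity), ← Real.mul_rpow ht.le (by positivity), norm_smul,
      Real.norm_of_nonneg (by positivity), mul_add, mul_one, mul_inv_cancel_left₀ ht.ne']
  have hscale : ∫⁻ z, ENNReal.ofReal ((1 + ‖t⁻¹ • z‖) ^ (-r)) ∂μ =
      ENNReal.ofReal (t ^ finrank ℝ E) * bracketMass μ r := by
    rw [← lintegral_map (f := fun z : E => ENNReal.ofReal ((1 + ‖z‖) ^ (-r)))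
        (g := fun z => t⁻¹ • z) (by fun_prop) (by fun_prop),
      Measure.map_addHaar_smul μ (inv_ne_zero ht.ne'), lintegral_smul_measure]
    simp [abs_of_pos ht, bracketMass]
  simp_rw [hfactor]
  rw [lintegral_const_mul _ (by fun_prop), hscale, ← mul_assoc,
    ← ENNReal.ofReal_mul (by positivity), ← Real.rpow_natCast, ← Real.rpow_add ht, neg_add_eq_sub]

end JapaneseBracket

section Tonelli

variable {α β : Type*} [MeasurableSpace α] [MeasurableSpace β] {μ : Measure α} {ν : Measure β}
  {S : Set (α × β)} {f : α × β → ℝ≥0∞}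

lemma setLIntegral_section_eq_lintegral_indicator (hS : MeasurableSet S) (x : α) :
    ∫⁻ y in {y | (x, y) ∈ S}, f (x, y) ∂ν = ∫⁻ y, S.indicator f (x, y) ∂ν :=
  (lintegral_indicator (measurable_prodMk_left hS) _).symm

lemma measurable_setLIntegral_section [SFinite ν] (hS : MeasurableSet S) (hf : Measurable f) :
    Measurable fun x => ∫⁻ y in {y | (x, y) ∈ S}, f (x, y) ∂ν := by
  simp_rw [setLIntegral_section_eq_lintegral_indicator hS]
  exact (hf.indicator hS).lintegral_prod_right'

lemma lintegral_setLIntegral_section_swap [SFinite μ] [SFinite ν] (hS : MeasurableSet S)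
    (hf : Measurable f) :
    ∫⁻ x, ∫⁻ y in {y | (x, y) ∈ S}, f (x, y) ∂ν ∂μ =
      ∫⁻ y, ∫⁻ x in {x | (x, y) ∈ S}, f (x, y) ∂μ ∂ν :=
  calc ∫⁻ x, ∫⁻ y in {y | (x, y) ∈ S}, f (x, y) ∂ν ∂μ
      = ∫⁻ x, ∫⁻ y, S.indicator f (x, y) ∂ν ∂μ :=
        lintegral_congr (setLIntegral_section_eq_lintegral_indicator hS)
    _ = ∫⁻ y, ∫⁻ x, S.indicator f (x, y) ∂μ ∂ν :=
        lintegral_lintegral_swap (hf.indicator hS).aemeasurable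
    _ = ∫⁻ y, ∫⁻ x in {x | (x, y) ∈ S}, f (x, y) ∂μ ∂ν :=
        lintegral_congr fun _ => lintegral_indicator (measurable_prodMk_right hS) _

end Tonelli

section Definitions

variable {X : Type*} [PseudoMetricSpace X]

/-- The quantitative bound `s` on the upper Assouad codimension of `A`, with constant `c₀`: every
`r`-neighbourhood of `A` fills at least the proportion `c₀ (r / R) ^ s` of each ball of radius
`R > r` centred on `A`. -/
def UpperAssouadCodimBound [MeasurableSpace X] (μ : Measure X) (A : Set X) (s c₀ : ℝ) : Prop :=
  ∀ x ∈ A, ∀ r R : ℝ, 0 < r → r < R →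
    ENNReal.ofReal (c₀ * (r / R) ^ s) * μ (closedBall x R) ≤ μ (thickening r A ∩ closedBall x R)

/-- The integral of `‖f‖ ^ p * d_Ω ^ b` over `Ω`, where `d_Ω` is the distance to the complement
of `Ω`; both sides of a Hardy inequality have this form. -/
noncomputable def distWeightedEnergy [MeasurableSpace X] {F : Type*} [Norm F] (μ : Measure X)
    (Ω : Set X) (p b : ℝ) (f : X → F) : ℝ≥0∞ :=
  ∫⁻ x in Ω, ENNReal.ofReal (‖f x‖ ^ p * infDist x Ωᶜ ^ b) ∂μ

/-- The `(p, β)`-Hardy inequality on `Ω`, tested on Lipschitz functions with compact support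
in `Ω`. -/
def AdmitsHardyInequality {E : Type*} [NormedAddCommGroup E] [NormedSpace ℝ E] [MeasurableSpace E]
    (μ : Measure E) (Ω : Set E) (p β : ℝ) : Prop :=
  ∃ C : ℝ, 0 < C ∧ ∀ u : E → ℝ,
    (∃ L : NNReal, LipschitzWith L u) → HasCompactSupport u → tsupport u ⊆ Ω →
    distWeightedEnergy μ Ω p (β - p) u ≤
      ENNReal.ofReal C * distWeightedEnergy μ Ω p β (fderiv ℝ u)

/-- The points within `2 d_Ω(x)` of `x` whose distance to the complement of `Ω` is less than
`ε d_Ω(x)`. When the complement is thick, this set has measure comparable to `d_Ω(x) ^ n`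
in dimension `n`. -/
def boundaryCollar (Ω : Set X) (ε : ℝ) (x : X) : Set X :=
  {y | infDist y Ωᶜ < ε * infDist x Ωᶜ} ∩ closedBall x (2 * infDist x Ωᶜ)

end Definitions

section Energy

lemma distWeightedEnergy_one {X : Type*} [PseudoMetricSpace X] [MeasurableSpace X]
    {μ : Measure X} {Ω : Set X} {F : Type*} [SeminormedAddGroup F] (b : ℝ) (f : X → F) :
    distWeightedEnergy μ Ω 1 b f = ∫⁻ x in Ω, ‖f x‖ₑ * ENNReal.ofReal (infDist x Ωᶜ ^ b) ∂μ := by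
  simp_rw [distWeightedEnergy, Real.rpow_one, ENNReal.ofReal_mul (norm_nonneg _), ofReal_norm]

lemma distWeightedEnergy_ne_top {X : Type*} [MetricSpace X] [MeasurableSpace X] [BorelSpace X]
    {μ : Measure X} [IsFiniteMeasureOnCompacts μ] {Ω : Set X} {u : X → ℝ} {p b : ℝ} (hΩ : IsOpen Ω)
    (hΩc : Ωᶜ.Nonempty) (hp : 0 < p) (hu : Continuous u) (huc : HasCompactSupport u)
    (huΩ : tsupport u ⊆ Ω) : distWeightedEnergy μ Ω p b u ≠ ∞ := by
  have hcont : ContinuousOn (fun x => ‖u x‖ ^ p * infDist x Ωᶜ ^ b) (tsupport u) :=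
    (hu.norm.rpow_const fun _ => .inr hp.le).continuousOn.mul <|
      (continuous_infDist_pt _).continuousOn.rpow_const fun x hx =>
        .inl (infDist_compl_pos hΩ hΩc (huΩ hx)).ne'
  have hsupp : (fun x => ENNReal.ofReal (‖u x‖ ^ p * infDist x Ωᶜ ^ b)).support ⊆ tsupport u := by
    refine Function.support_subset_iff'.2 fun x hx => ?_
    simp [image_eq_zero_of_notMem_tsupport hx, Real.zero_rpow hp.ne']
  rw [distWeightedEnergy, setLIntegral_eq_of_support_subset (hsupp.trans huΩ),
    ← setLIntegral_eq_of_support_subset hsupp]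
  exact (hcont.integrableOn_compact huc).lintegral_lt_top.ne

lemma admitsHardyInequality_of_ne_top {E : Type*} [NormedAddCommGroup E] [NormedSpace ℝ E]
    [MeasurableSpace E] {μ : Measure E} {Ω : Set E} {p β : ℝ} {C : ℝ≥0∞} (hC : C ≠ ∞)
    (h : ∀ u : E → ℝ, (∃ L : NNReal, LipschitzWith L u) → HasCompactSupport u → tsupport u ⊆ Ω →
      distWeightedEnergy μ Ω p (β - p) u ≤ C * distWeightedEnergy μ Ω p β (fderiv ℝ u)) :
    AdmitsHardyInequality μ Ω p β := by
  refine ⟨C.toReal + 1, by positivity, fun u hu huc huΩ => (h u hu huc huΩ).trans ?_⟩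
  gcongr
  exact ENNReal.le_ofReal_iff_toReal_le hC (by positivity) |>.2 (by linarith)

end Energy

section Collar

lemma measurableSet_boundaryCollar {X : Type*} [PseudoMetricSpace X] [MeasurableSpace X]
    [OpensMeasurableSpace X] [SecondCountableTopology X] (Ω : Set X) (ε : ℝ) :
    MeasurableSet {q : X × X | q.2 ∈ boundaryCollar Ω ε q.1} := by
  exact (measurableSet_lt (by fun_prop) (by fun_prop)).inter
    (measurableSet_le (by fun_prop) (by fun_prop))

variable {E : Type*} [NormedAddCommGroup E] [NormedSpace ℝ E] [FiniteDimensional ℝ E]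
  [MeasurableSpace E] [BorelSpace E] {μ : Measure E} [μ.IsAddHaarMeasure] {Ω : Set E} {ε : ℝ}

lemma le_measure_boundaryCollar {s c₀ : ℝ} {x : E} (hΩ : IsOpen Ω) (hΩc : Ωᶜ.Nonempty)
    (hthick : UpperAssouadCodimBound μ Ωᶜ s c₀) (hε₀ : 0 < ε) (hε₁ : ε < 1) (hx : x ∈ Ω) :
    ENNReal.ofReal (c₀ * ε ^ s) * (ENNReal.ofReal (infDist x Ωᶜ ^ finrank ℝ E) * μ (ball 0 1)) ≤
      μ (boundaryCollar Ω ε x) := by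
  have hd : 0 < infDist x Ωᶜ := infDist_compl_pos hΩ hΩc hx
  obtain ⟨w, hw, hxw⟩ := hΩ.isClosed_compl.exists_infDist_eq_dist hΩc x
  have hball : closedBall w (infDist x Ωᶜ) ⊆ closedBall x (2 * infDist x Ωᶜ) :=
    closedBall_subset_closedBall' (by rw [dist_comm, ← hxw, two_mul])
  have hnear : thickening (ε * infDist x Ωᶜ) Ωᶜ ⊆ {y | infDist y Ωᶜ < ε * infDist x Ωᶜ} :=
    fun y hy => (mem_thickening_iff_infDist_lt hΩc).1 hy
  calc ENNReal.ofReal (c₀ * ε ^ s) * (ENNReal.ofReal (infDist x Ωᶜ ^ finrank ℝ E) * μ (ball 0 1))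
      = ENNReal.ofReal (c₀ * (ε * infDist x Ωᶜ / infDist x Ωᶜ) ^ s) *
          μ (closedBall w (infDist x Ωᶜ)) := by
        rw [mul_div_cancel_right₀ _ hd.ne', Measure.addHaar_closedBall μ _ hd.le]
    _ ≤ μ (thickening (ε * infDist x Ωᶜ) Ωᶜ ∩ closedBall w (infDist x Ωᶜ)) :=
        hthick w hw _ _ (by positivity) (mul_lt_of_lt_one_left hd hε₁)
    _ ≤ μ (boundaryCollar Ω ε x) := measure_mono (Set.inter_subset_inter hnear hball)

lemma setLIntegral_rpow_infDist_boundaryCollar_le {γ : ℝ} {y : E} (hγ : 0 ≤ γ + finrank ℝ E)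
    (hε : 0 < ε) (hy : 0 < infDist y Ωᶜ) :
    ∫⁻ x in {x | y ∈ boundaryCollar Ω ε x},
        ENNReal.ofReal (infDist x Ωᶜ ^ (-(γ + finrank ℝ E))) ∂μ ≤
      ENNReal.ofReal (3 ^ (γ + finrank ℝ E)) * bracketMass μ (γ + finrank ℝ E) *
        ENNReal.ofReal (ε ^ γ) * ENNReal.ofReal (infDist y Ωᶜ ^ (-γ)) := by
  set r : ℝ := γ + finrank ℝ E with hr
  have hdiv : 0 < infDist y Ωᶜ / ε := div_pos hy hε
  have hweight : ∀ x ∈ {x | y ∈ boundaryCollar Ω ε x}, ENNReal.ofReal (infDist x Ωᶜ ^ (-r)) ≤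
      ENNReal.ofReal (3 ^ r) * ENNReal.ofReal ((infDist y Ωᶜ / ε + ‖x - y‖) ^ (-r)) := by
    rintro x ⟨hyx : infDist y Ωᶜ < ε * infDist x Ωᶜ, hball⟩
    have hdx : infDist y Ωᶜ / ε < infDist x Ωᶜ := (div_lt_iff₀' hε).2 hyx
    rw [mem_closedBall, dist_comm, dist_eq_norm] at hball
    rw [← ENNReal.ofReal_mul (by positivity)]
    exact ENNReal.ofReal_le_ofReal
      (rpow_neg_le_of_le_mul hγ three_pos (by positivity) (by linarith))
  calc ∫⁻ x in {x | y ∈ boundaryCollar Ω ε x}, ENNReal.ofReal (infDist x Ωᶜ ^ (-r)) ∂μ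
      ≤ ∫⁻ x in {x | y ∈ boundaryCollar Ω ε x},
          ENNReal.ofReal (3 ^ r) * ENNReal.ofReal ((infDist y Ωᶜ / ε + ‖x - y‖) ^ (-r)) ∂μ :=
        setLIntegral_mono (by fun_prop) hweight
    _ ≤ ∫⁻ x, ENNReal.ofReal (3 ^ r) *
          ENNReal.ofReal ((infDist y Ωᶜ / ε + ‖x - y‖) ^ (-r)) ∂μ := setLIntegral_le_lintegral _ _
    _ = ENNReal.ofReal (3 ^ r) *
          (ENNReal.ofReal ((infDist y Ωᶜ / ε) ^ (-γ)) * bracketMass μ r) := by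
        rw [lintegral_const_mul _ (by fun_prop), lintegral_sub_right_eq_self
          (fun z => ENNReal.ofReal ((infDist y Ωᶜ / ε + ‖z‖) ^ (-r))) y,
          lintegral_add_norm_rpow_neg μ r hdiv, hr, sub_add_cancel_right]
    _ = ENNReal.ofReal (3 ^ r) * bracketMass μ r * ENNReal.ofReal (ε ^ γ) *
          ENNReal.ofReal (infDist y Ωᶜ ^ (-γ)) := by
        rw [Real.div_rpow hy.le hε.le, Real.rpow_neg hε.le, div_inv_eq_mul,
          ENNReal.ofReal_mul (by positivity)]
        ring

lemma lintegral_rpow_infDist_mul_setLIntegral_boundaryCollar_le {γ : ℝ} {f : E → ℝ≥0∞}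
    (hΩ : IsOpen Ω) (hΩc : Ωᶜ.Nonempty) (hγ : 0 ≤ γ + finrank ℝ E) (hε : 0 < ε)
    (hf : Measurable f) (hfΩ : f.support ⊆ Ω) :
    ∫⁻ x, ENNReal.ofReal (infDist x Ωᶜ ^ (-(γ + finrank ℝ E))) *
        ∫⁻ y in boundaryCollar Ω ε x, f y ∂μ ∂μ ≤
      ENNReal.ofReal (3 ^ (γ + finrank ℝ E)) * bracketMass μ (γ + finrank ℝ E) *
        ENNReal.ofReal (ε ^ γ) * ∫⁻ y in Ω, f y * ENNReal.ofReal (infDist y Ωᶜ ^ (-γ)) ∂μ := by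
  set r : ℝ := γ + finrank ℝ E
  set K : ℝ≥0∞ := ENNReal.ofReal (3 ^ r) * bracketMass μ r * ENNReal.ofReal (ε ^ γ)
  have hinner (y : E) : ∫⁻ x in {x | y ∈ boundaryCollar Ω ε x},
      ENNReal.ofReal (infDist x Ωᶜ ^ (-r)) * f y ∂μ ≤
        K * (f y * ENNReal.ofReal (infDist y Ωᶜ ^ (-γ))) := by
    rw [lintegral_mul_const _ (by fun_prop)]
    by_cases hy : y ∈ Ω
    · refine (mul_le_mul_left (setLIntegral_rpow_infDist_boundaryCollar_le hγ hε
        (infDist_compl_pos hΩ hΩc hy)) (f y)).trans_eq ?_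
      ring
    · simp [Function.notMem_support.1 fun h => hy (hfΩ h)]
  calc ∫⁻ x, ENNReal.ofReal (infDist x Ωᶜ ^ (-r)) * ∫⁻ y in boundaryCollar Ω ε x, f y ∂μ ∂μ
      = ∫⁻ x, ∫⁻ y in boundaryCollar Ω ε x, ENNReal.ofReal (infDist x Ωᶜ ^ (-r)) * f y ∂μ ∂μ := by
        simp_rw [lintegral_const_mul _ hf]
    _ = ∫⁻ y, ∫⁻ x in {x | y ∈ boundaryCollar Ω ε x},
          ENNReal.ofReal (infDist x Ωᶜ ^ (-r)) * f y ∂μ ∂μ :=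
        lintegral_setLIntegral_section_swap (measurableSet_boundaryCollar Ω ε)
          (f := fun q : E × E => ENNReal.ofReal (infDist q.1 Ωᶜ ^ (-r)) * f q.2) (by fun_prop)
    _ ≤ ∫⁻ y, K * (f y * ENNReal.ofReal (infDist y Ωᶜ ^ (-γ))) ∂μ := lintegral_mono hinner
    _ = K * ∫⁻ y in Ω, f y * ENNReal.ofReal (infDist y Ωᶜ ^ (-γ)) ∂μ := by
        rw [lintegral_const_mul _ (by fun_prop), setLIntegral_eq_of_support_subset
          ((Function.support_mul_subset_left _ _).trans hfΩ)]

end Collar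

section Oscillation

variable {E : Type*} [NormedAddCommGroup E] [NormedSpace ℝ E] {Ω : Set E}

lemma rpow_infDist_mul_norm_le {r τ : ℝ} {x h : E} (hr : 0 ≤ r) (hh : ‖h‖ ≤ 2 * infDist x Ωᶜ)
    (hτ : τ ∈ Set.Ioc (0 : ℝ) 1) (hz : 0 < infDist (x + τ • h) Ωᶜ) :
    infDist x Ωᶜ ^ (-r) * ‖h‖ ≤ 5 ^ r * (infDist (x + τ • h) Ωᶜ + ‖h‖) ^ (-(r - 1)) := by
  set z := x + τ • h with hz_def
  have hzx : dist z x ≤ ‖h‖ := by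
    rw [hz_def, dist_self_add_left, norm_smul, Real.norm_of_nonneg hτ.1.le]
    exact mul_le_of_le_one_left (norm_nonneg h) hτ.2
  have hdz : infDist z Ωᶜ ≤ infDist x Ωᶜ + dist z x := infDist_le_infDist_add_dist
  have hpos : 0 < infDist z Ωᶜ + ‖h‖ := by positivity
  calc infDist x Ωᶜ ^ (-r) * ‖h‖
      ≤ 5 ^ r * (infDist z Ωᶜ + ‖h‖) ^ (-r) * (infDist z Ωᶜ + ‖h‖) := by
        gcongr
        · exact rpow_neg_le_of_le_mul hr (by norm_num) hpos (by linarith)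
        · linarith
    _ = 5 ^ r * (infDist z Ωᶜ + ‖h‖) ^ (-(r - 1)) := by
        rw [mul_assoc, ← Real.rpow_add_one hpos.ne', neg_sub, neg_add_eq_sub]

lemma enorm_fderiv_eq_zero_of_tsupport_subset {v : E → ℝ} {z : E} (hvΩ : tsupport v ⊆ Ω)
    (hz : z ∉ Ω) : ‖fderiv ℝ v z‖ₑ = 0 := by
  rw [← ofReal_norm, fderiv_of_notMem_tsupport ℝ fun h => hz (hvΩ h), norm_zero, ofReal_zero]

variable [FiniteDimensional ℝ E] [MeasurableSpace E] [BorelSpace E] {μ : Measure E}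
  [μ.IsAddHaarMeasure] {γ : ℝ} {v : E → ℝ} {L : NNReal}

lemma lintegral_mul_setLIntegral_closedBall_sub_eq (w ρ : E → ℝ) (hw : Measurable w)
    (hρ : Measurable ρ) (hv : Measurable v) :
    ∫⁻ x, ENNReal.ofReal (w x) * ∫⁻ y in closedBall x (ρ x), ‖v y - v x‖ₑ ∂μ ∂μ =
      ∫⁻ h, ∫⁻ x in {x | ‖h‖ ≤ ρ x}, ENNReal.ofReal (w x) * ‖v (x + h) - v x‖ₑ ∂μ ∂μ := by
  have htranslate (x : E) : ∫⁻ y in closedBall x (ρ x), ‖v y - v x‖ₑ ∂μ =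
      ∫⁻ h in {h | ‖h‖ ≤ ρ x}, ‖v (x + h) - v x‖ₑ ∂μ := by
    rw [← (measurePreserving_add_left μ x).setLIntegral_comp_preimage
      isClosed_closedBall.measurableSet (by fun_prop)]
    congr 2
    ext h
    simp
  have hset : MeasurableSet {q : E × E | ‖q.2‖ ≤ ρ q.1} :=
    measurableSet_le (by fun_prop) (by fun_prop)
  calc ∫⁻ x, ENNReal.ofReal (w x) * ∫⁻ y in closedBall x (ρ x), ‖v y - v x‖ₑ ∂μ ∂μ
      = ∫⁻ x, ∫⁻ h in {h | ‖h‖ ≤ ρ x}, ENNReal.ofReal (w x) * ‖v (x + h) - v x‖ₑ ∂μ ∂μ :=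
        lintegral_congr fun x => by rw [htranslate, lintegral_const_mul _ (by fun_prop)]
    _ = ∫⁻ h, ∫⁻ x in {x | ‖h‖ ≤ ρ x}, ENNReal.ofReal (w x) * ‖v (x + h) - v x‖ₑ ∂μ ∂μ :=
        lintegral_setLIntegral_section_swap hset
          (f := fun q : E × E => ENNReal.ofReal (w q.1) * ‖v (q.1 + q.2) - v q.1‖ₑ) (by fun_prop)

lemma setLIntegral_rpow_infDist_mul_enorm_sub_le {r : ℝ} (hΩ : IsOpen Ω) (hΩc : Ωᶜ.Nonempty)
    (hr : 0 ≤ r) (hv : LipschitzWith L v) (hvΩ : tsupport v ⊆ Ω) (h : E) :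
    ∫⁻ x in {x | ‖h‖ ≤ 2 * infDist x Ωᶜ},
        ENNReal.ofReal (infDist x Ωᶜ ^ (-r)) * ‖v (x + h) - v x‖ₑ ∂μ ≤
      ∫⁻ z, ENNReal.ofReal (5 ^ r) * (‖fderiv ℝ v z‖ₑ *
        ENNReal.ofReal ((infDist z Ωᶜ + ‖h‖) ^ (-(r - 1)))) ∂μ := by
  refine setLIntegral_mul_enorm_sub_le hv (measurableSet_le (by fun_prop) (by fun_prop))
    (by fun_prop) h fun x hx τ hτ => ?_
  by_cases hz : x + τ • h ∈ Ω
  · have hkernel := ENNReal.ofReal_le_ofReal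
      (rpow_infDist_mul_norm_le hr hx hτ (infDist_compl_pos hΩ hΩc hz))
    rw [ENNReal.ofReal_mul (Real.rpow_nonneg infDist_nonneg _), ENNReal.ofReal_mul (by positivity),
      ofReal_norm] at hkernel
    rw [mul_left_comm, mul_left_comm (ENNReal.ofReal (5 ^ r))]
    exact mul_le_mul_right hkernel _
  · simp [enorm_fderiv_eq_zero_of_tsupport_subset hvΩ hz]

lemma lintegral_rpow_infDist_mul_setLIntegral_closedBall_le (hΩ : IsOpen Ω) (hΩc : Ωᶜ.Nonempty)
    (hγ : 0 ≤ γ + finrank ℝ E) (hv : LipschitzWith L v) (hvΩ : tsupport v ⊆ Ω) :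
    ∫⁻ x, ENNReal.ofReal (infDist x Ωᶜ ^ (-(γ + finrank ℝ E))) *
        ∫⁻ y in closedBall x (2 * infDist x Ωᶜ), ‖v y - v x‖ₑ ∂μ ∂μ ≤
      ENNReal.ofReal (5 ^ (γ + finrank ℝ E)) * bracketMass μ (γ + finrank ℝ E - 1) *
        ∫⁻ z in Ω, ‖fderiv ℝ v z‖ₑ * ENNReal.ofReal (infDist z Ωᶜ ^ (1 - γ)) ∂μ := by
  set r : ℝ := γ + finrank ℝ E with hr
  have hexponent : finrank ℝ E - (r - 1) = 1 - γ := by rw [hr]; ring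
  have hinner (z : E) : ∫⁻ h, ENNReal.ofReal (5 ^ r) * (‖fderiv ℝ v z‖ₑ *
        ENNReal.ofReal ((infDist z Ωᶜ + ‖h‖) ^ (-(r - 1)))) ∂μ =
      ENNReal.ofReal (5 ^ r) * bracketMass μ (r - 1) *
        (‖fderiv ℝ v z‖ₑ * ENNReal.ofReal (infDist z Ωᶜ ^ (1 - γ))) := by
    by_cases hz : z ∈ Ω
    · rw [lintegral_const_mul _ (by fun_prop), lintegral_const_mul _ (by fun_prop),
        lintegral_add_norm_rpow_neg μ _ (infDist_compl_pos hΩ hΩc hz), hexponent]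
      ring
    · simp [enorm_fderiv_eq_zero_of_tsupport_subset hvΩ hz]
  rw [lintegral_mul_setLIntegral_closedBall_sub_eq _ _ (by fun_prop) (by fun_prop)
    hv.continuous.measurable]
  calc ∫⁻ h, ∫⁻ x in {x | ‖h‖ ≤ 2 * infDist x Ωᶜ},
          ENNReal.ofReal (infDist x Ωᶜ ^ (-r)) * ‖v (x + h) - v x‖ₑ ∂μ ∂μ
      ≤ ∫⁻ h, ∫⁻ z, ENNReal.ofReal (5 ^ r) * (‖fderiv ℝ v z‖ₑ *
          ENNReal.ofReal ((infDist z Ωᶜ + ‖h‖) ^ (-(r - 1)))) ∂μ ∂μ :=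
        lintegral_mono (setLIntegral_rpow_infDist_mul_enorm_sub_le hΩ hΩc hγ hv hvΩ)
    _ = ∫⁻ z, ∫⁻ h, ENNReal.ofReal (5 ^ r) * (‖fderiv ℝ v z‖ₑ *
          ENNReal.ofReal ((infDist z Ωᶜ + ‖h‖) ^ (-(r - 1)))) ∂μ ∂μ :=
        lintegral_lintegral_swap (by fun_prop)
    _ = ∫⁻ z, ENNReal.ofReal (5 ^ r) * bracketMass μ (r - 1) *
          (‖fderiv ℝ v z‖ₑ * ENNReal.ofReal (infDist z Ωᶜ ^ (1 - γ))) ∂μ := lintegral_congr hinner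
    _ = ENNReal.ofReal (5 ^ r) * bracketMass μ (r - 1) *
          ∫⁻ z in Ω, ‖fderiv ℝ v z‖ₑ * ENNReal.ofReal (infDist z Ωᶜ ^ (1 - γ)) ∂μ := by
        rw [lintegral_const_mul _ (by fun_prop), setLIntegral_eq_of_support_subset]
        exact Function.support_subset_iff'.2 fun z hz => by
          simp [enorm_fderiv_eq_zero_of_tsupport_subset hvΩ hz]

end Oscillation

section HardyOne

variable {E : Type*} [NormedAddCommGroup E] [NormedSpace ℝ E] [FiniteDimensional ℝ E]
  [MeasurableSpace E] [BorelSpace E] {μ : Measure E} [μ.IsAddHaarMeasure] {Ω : Set E}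

lemma enorm_mul_measure_le {α : Type*} [MeasurableSpace α] {μ : Measure α} {v : α → ℝ}
    {A B : Set α} (hv : Measurable v) (hAB : A ⊆ B) (x : α) :
    ‖v x‖ₑ * μ A ≤ ∫⁻ y in A, ‖v y‖ₑ ∂μ + ∫⁻ y in B, ‖v y - v x‖ₑ ∂μ :=
  calc ‖v x‖ₑ * μ A = ∫⁻ _ in A, ‖v x‖ₑ ∂μ := (setLIntegral_const A _).symm
    _ ≤ ∫⁻ y in A, (‖v y‖ₑ + ‖v y - v x‖ₑ) ∂μ := lintegral_mono fun y => by
        simpa using enorm_sub_le (a := v y) (b := v y - v x)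
    _ = ∫⁻ y in A, ‖v y‖ₑ ∂μ + ∫⁻ y in A, ‖v y - v x‖ₑ ∂μ := lintegral_add_left (by fun_prop) _
    _ ≤ ∫⁻ y in A, ‖v y‖ₑ ∂μ + ∫⁻ y in B, ‖v y - v x‖ₑ ∂μ := by gcongr

lemma mul_enorm_mul_rpow_infDist_le {γ s c₀ ε : ℝ} {v : E → ℝ} {x : E} (hΩ : IsOpen Ω)
    (hΩc : Ωᶜ.Nonempty) (hc₀ : 0 ≤ c₀) (hthick : UpperAssouadCodimBound μ Ωᶜ s c₀) (hε₀ : 0 < ε)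
    (hε₁ : ε < 1) (hv : Measurable v) (hx : x ∈ Ω) :
    ENNReal.ofReal c₀ * μ (ball 0 1) * ENNReal.ofReal (ε ^ s) *
        (‖v x‖ₑ * ENNReal.ofReal (infDist x Ωᶜ ^ (-γ))) ≤
      ENNReal.ofReal (infDist x Ωᶜ ^ (-(γ + finrank ℝ E))) *
          ∫⁻ y in boundaryCollar Ω ε x, ‖v y‖ₑ ∂μ +
        ENNReal.ofReal (infDist x Ωᶜ ^ (-(γ + finrank ℝ E))) *
          ∫⁻ y in closedBall x (2 * infDist x Ωᶜ), ‖v y - v x‖ₑ ∂μ := by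
  have hd : 0 < infDist x Ωᶜ := infDist_compl_pos hΩ hΩc hx
  have hsplit : ENNReal.ofReal (infDist x Ωᶜ ^ (-γ)) =
      ENNReal.ofReal (infDist x Ωᶜ ^ (-(γ + finrank ℝ E))) *
        ENNReal.ofReal (infDist x Ωᶜ ^ finrank ℝ E) := by
    rw [← ENNReal.ofReal_mul (by positivity), ← Real.rpow_natCast, ← Real.rpow_add hd, neg_add,
      neg_add_cancel_right]
  calc ENNReal.ofReal c₀ * μ (ball 0 1) * ENNReal.ofReal (ε ^ s) *
        (‖v x‖ₑ * ENNReal.ofReal (infDist x Ωᶜ ^ (-γ)))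
      = ENNReal.ofReal (infDist x Ωᶜ ^ (-(γ + finrank ℝ E))) * (‖v x‖ₑ *
          (ENNReal.ofReal (c₀ * ε ^ s) *
            (ENNReal.ofReal (infDist x Ωᶜ ^ finrank ℝ E) * μ (ball 0 1)))) := by
        rw [hsplit, ENNReal.ofReal_mul hc₀]
        ring
    _ ≤ ENNReal.ofReal (infDist x Ωᶜ ^ (-(γ + finrank ℝ E))) *
          (∫⁻ y in boundaryCollar Ω ε x, ‖v y‖ₑ ∂μ +
            ∫⁻ y in closedBall x (2 * infDist x Ωᶜ), ‖v y - v x‖ₑ ∂μ) := by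
        gcongr
        exact (mul_le_mul_right (le_measure_boundaryCollar hΩ hΩc hthick hε₀ hε₁ hx) _).trans
          (enorm_mul_measure_le hv Set.inter_subset_right x)
    _ = _ := mul_add _ _ _

lemma mul_distWeightedEnergy_one_le_add {γ s c₀ ε : ℝ} {v : E → ℝ} {L : NNReal} (hΩ : IsOpen Ω)
    (hΩc : Ωᶜ.Nonempty) (hγ : 0 ≤ γ + finrank ℝ E) (hc₀ : 0 ≤ c₀)
    (hthick : UpperAssouadCodimBound μ Ωᶜ s c₀) (hε₀ : 0 < ε) (hε₁ : ε < 1)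
    (hv : LipschitzWith L v) (hvΩ : tsupport v ⊆ Ω) :
    ENNReal.ofReal c₀ * μ (ball 0 1) * ENNReal.ofReal (ε ^ s) *
        distWeightedEnergy μ Ω 1 (-γ) v ≤
      ENNReal.ofReal (3 ^ (γ + finrank ℝ E)) * bracketMass μ (γ + finrank ℝ E) *
          ENNReal.ofReal (ε ^ γ) * distWeightedEnergy μ Ω 1 (-γ) v +
        ENNReal.ofReal (5 ^ (γ + finrank ℝ E)) * bracketMass μ (γ + finrank ℝ E - 1) *
          distWeightedEnergy μ Ω 1 (1 - γ) (fderiv ℝ v) := by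
  have hvm : Measurable v := hv.continuous.measurable
  have hsupp : (fun y => ‖v y‖ₑ).support ⊆ Ω := fun y hy =>
    hvΩ (subset_tsupport v fun h0 => hy (by simp [h0]))
  have hcollar : Measurable fun x => ENNReal.ofReal (infDist x Ωᶜ ^ (-(γ + finrank ℝ E))) *
      ∫⁻ y in boundaryCollar Ω ε x, ‖v y‖ₑ ∂μ :=
    .mul (by fun_prop) (measurable_setLIntegral_section (measurableSet_boundaryCollar Ω ε)
      (f := fun q : E × E => ‖v q.2‖ₑ) (by fun_prop))
  simp_rw [distWeightedEnergy_one]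
  rw [← lintegral_const_mul _ (by fun_prop)]
  refine (setLIntegral_mono' hΩ.measurableSet fun x hx =>
    mul_enorm_mul_rpow_infDist_le hΩ hΩc hc₀ hthick hε₀ hε₁ hvm hx).trans ?_
  rw [lintegral_add_left hcollar]
  exact add_le_add
    ((setLIntegral_le_lintegral _ _).trans
      (lintegral_rpow_infDist_mul_setLIntegral_boundaryCollar_le hΩ hΩc hγ hε₀ (by fun_prop) hsupp))
    ((setLIntegral_le_lintegral _ _).trans
      (lintegral_rpow_infDist_mul_setLIntegral_closedBall_le hΩ hΩc hγ hv hvΩ))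

theorem admitsHardyInequality_one {β s c₀ : ℝ} (hΩ : IsOpen Ω) (hΩc : Ωᶜ.Nonempty) (hβ : β < 0)
    (hs : s < 1 - β) (hc₀ : 0 < c₀) (hthick : UpperAssouadCodimBound μ Ωᶜ s c₀) :
    AdmitsHardyInequality μ Ω 1 β := by
  set r : ℝ := 1 - β + finrank ℝ E
  set m : ℝ≥0∞ := ENNReal.ofReal c₀ * μ (ball 0 1)
  have hm₀ : m ≠ 0 := by simp [m, hc₀, (measure_ball_pos μ (0 : E) one_pos).ne']
  have hm : m ≠ ∞ := ENNReal.mul_ne_top ofReal_ne_top measure_ball_lt_top.ne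
  have hr : bracketMass μ r ≠ ∞ := bracketMass_ne_top μ (by simp only [r]; linarith)
  have hr' : bracketMass μ (r - 1) ≠ ∞ := bracketMass_ne_top μ (by simp only [r]; linarith)
  obtain ⟨ε, hε₀, hε₁, hε⟩ := exists_mul_rpow_le_mul_rpow (m := m)
    (K := 2 * (ENNReal.ofReal (3 ^ r) * bracketMass μ r)) (by finiteness) hm₀ hs
  set M : ℝ≥0∞ := m * ENNReal.ofReal (ε ^ s)
  have hM₀ : M ≠ 0 := mul_ne_zero hm₀ (ENNReal.ofReal_pos.2 (by positivity)).ne'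
  have hM : M ≠ ∞ := ENNReal.mul_ne_top hm ofReal_ne_top
  refine admitsHardyInequality_of_ne_top
    (C := M⁻¹ * (2 * (ENNReal.ofReal (5 ^ r) * bracketMass μ (r - 1)))) (by finiteness) ?_
  rintro v ⟨L, hv⟩ hvc hvΩ
  have hfin : distWeightedEnergy μ Ω 1 (β - 1) v ≠ ∞ :=
    distWeightedEnergy_ne_top hΩ hΩc one_pos hv.continuous hvc hvΩ
  have hsum := mul_distWeightedEnergy_one_le_add (γ := 1 - β) hΩ hΩc
    (by linarith [(finrank ℝ E).cast_nonneg (α := ℝ)]) hc₀.le hthick hε₀ hε₁ hv hvΩ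
  rw [neg_sub, sub_sub_self] at hsum
  have habsorb := mul_le_two_mul_of_mul_le_mul_add (by finiteness) (by rwa [← mul_assoc]) hsum
  rw [mul_assoc, ← ENNReal.div_eq_inv_mul, ENNReal.le_div_iff_mul_le (.inl hM₀) (.inl hM), mul_comm]
  simpa only [M, m, r, mul_assoc] using habsorb

end HardyOne

section SelfImprovement

lemma support_abs_rpow {X : Type*} {u : X → ℝ} {θ : ℝ} (hθ : θ ≠ 0) :
    (fun x => |u x| ^ θ).support = u.support := by
  ext x
  simp [Real.rpow_eq_zero (abs_nonneg (u x)) hθ]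

lemma distWeightedEnergy_abs_rpow {X : Type*} [PseudoMetricSpace X] [MeasurableSpace X]
    (μ : Measure X) (Ω : Set X) (u : X → ℝ) {p q : ℝ} (hq : q ≠ 0) (b : ℝ) :
    distWeightedEnergy μ Ω q b (fun x => |u x| ^ (p / q)) = distWeightedEnergy μ Ω p b u := by
  refine lintegral_congr fun x => ?_
  rw [Real.norm_of_nonneg (by positivity), ← Real.rpow_mul (abs_nonneg _), div_mul_cancel₀ _ hq,
    Real.norm_eq_abs]

variable {E : Type*} [NormedAddCommGroup E] [NormedSpace ℝ E] {u : E → ℝ} {Ω : Set E} {p q β : ℝ}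

lemma mul_norm_fderiv_abs_rpow_mul_rpow_le {a d : ℝ} {x : E} (hq : 0 < q) (hqp : q < p)
    (ha : 0 ≤ a) (hd : 0 < d) (hu : DifferentiableAt ℝ u x) :
    a * (‖fderiv ℝ (fun y => |u y| ^ (p / q)) x‖ ^ q * d ^ (β - p + q)) ≤
      ‖u x‖ ^ p * d ^ (β - p) + (a * (p / q) ^ q) ^ (p / q) * (‖fderiv ℝ u x‖ ^ p * d ^ β) := by
  have hp : 0 < p := hq.trans hqp
  set g : ℝ := ‖fderiv ℝ u x‖
  have hexponent : (p / q - 1) * q = p - q := by field_simp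
  have hgrad : ‖fderiv ℝ (fun y => |u y| ^ (p / q)) x‖ ^ q =
      (p / q) ^ q * |u x| ^ (p - q) * g ^ q := by
    rw [norm_fderiv_abs_rpow ((one_lt_div hq).2 hqp) hu, Real.mul_rpow (by positivity)
      (norm_nonneg _), Real.mul_rpow (by positivity) (by positivity),
      ← Real.rpow_mul (abs_nonneg _), hexponent]
  have hscale (e : ℝ) : |u x| ^ e * d ^ (β - e) = (|u x| / d) ^ e * d ^ β := by
    rw [Real.div_rpow (abs_nonneg _) hd.le, Real.rpow_sub hd, div_mul_eq_mul_div, mul_div_assoc]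
  calc a * (‖fderiv ℝ (fun y => |u y| ^ (p / q)) x‖ ^ q * d ^ (β - p + q))
      = a * (p / q) ^ q * (|u x| ^ (p - q) * d ^ (β - (p - q)) * g ^ q) := by
        rw [hgrad, ← sub_add]
        ring
    _ = a * (p / q) ^ q * ((|u x| / d) ^ (p - q) * g ^ q) * d ^ β := by
        rw [hscale]
        ring
    _ ≤ ((|u x| / d) ^ p + (a * (p / q) ^ q) ^ (p / q) * g ^ p) * d ^ β := by
        gcongr
        exact mul_rpow_sub_mul_rpow_le hq hqp.le (by positivity) (by positivity) (norm_nonneg _)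
    _ = ‖u x‖ ^ p * d ^ (β - p) + (a * (p / q) ^ q) ^ (p / q) * (g ^ p * d ^ β) := by
        rw [add_mul, ← hscale, Real.norm_eq_abs, mul_assoc]

variable [FiniteDimensional ℝ E] [MeasurableSpace E] [BorelSpace E] {μ : Measure E}
  [μ.IsAddHaarMeasure]

lemma mul_distWeightedEnergy_fderiv_abs_rpow_le {a : ℝ} (hΩ : IsOpen Ω) (hΩc : Ωᶜ.Nonempty)
    (hq : 0 < q) (hqp : q < p) (ha : 0 ≤ a) (hu : ∃ L : NNReal, LipschitzWith L u) :
    ENNReal.ofReal a *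
        distWeightedEnergy μ Ω q (β - p + q) (fderiv ℝ fun x => |u x| ^ (p / q)) ≤
      distWeightedEnergy μ Ω p (β - p) u + ENNReal.ofReal ((a * (p / q) ^ q) ^ (p / q)) *
        distWeightedEnergy μ Ω p β (fderiv ℝ u) := by
  obtain ⟨L, hL⟩ := hu
  have hp : 0 < p := hq.trans hqp
  have hmeas : Measurable u := hL.continuous.measurable
  simp only [distWeightedEnergy]
  rw [← lintegral_const_mul' _ _ ofReal_ne_top, ← lintegral_const_mul' _ _ ofReal_ne_top,
    ← lintegral_add_left (by fun_prop)]
  refine setLIntegral_mono_ae' hΩ.measurableSet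
    (hL.ae_differentiableAt.mono fun x hx hxΩ => ?_)
  have hd : 0 < infDist x Ωᶜ := infDist_compl_pos hΩ hΩc hxΩ
  rw [← ENNReal.ofReal_mul ha, ← ENNReal.ofReal_mul (by positivity),
    ← ENNReal.ofReal_add (by positivity) (by positivity)]
  exact ENNReal.ofReal_le_ofReal (mul_norm_fderiv_abs_rpow_mul_rpow_le hq hqp ha hd hx)

theorem AdmitsHardyInequality.of_lt_exponent (hΩ : IsOpen Ω) (hΩc : Ωᶜ.Nonempty) (hq : 0 < q)
    (hqp : q < p) (h : AdmitsHardyInequality μ Ω q (β - p + q)) :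
    AdmitsHardyInequality μ Ω p β := by
  obtain ⟨C, hC, hHardy⟩ := h
  have hp : 0 < p := hq.trans hqp
  have hθ : 1 < p / q := (one_lt_div hq).2 hqp
  refine admitsHardyInequality_of_ne_top
    (C := ENNReal.ofReal ((2 * C * (p / q) ^ q) ^ (p / q))) ofReal_ne_top fun u hu huc huΩ => ?_
  have hfin : distWeightedEnergy μ Ω p (β - p) u ≠ ∞ :=
    distWeightedEnergy_ne_top hΩ hΩc hp hu.choose_spec.continuous huc huΩ
  have htsupport : tsupport (fun x => |u x| ^ (p / q)) = tsupport u :=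
    congrArg closure (support_abs_rpow (by positivity))
  have hlow : distWeightedEnergy μ Ω p (β - p) u ≤ ENNReal.ofReal C *
      distWeightedEnergy μ Ω q (β - p + q) (fderiv ℝ fun x => |u x| ^ (p / q)) := by
    have hpow := hHardy _ (exists_lipschitzWith_abs_rpow hθ hu huc)
      (by rwa [HasCompactSupport, htsupport]) (htsupport.trans_subset huΩ)
    rwa [add_sub_cancel_right, distWeightedEnergy_abs_rpow μ Ω u hq.ne'] at hpow
  refine (ENNReal.add_le_add_iff_left hfin).1 ?_
  calc distWeightedEnergy μ Ω p (β - p) u + distWeightedEnergy μ Ω p (β - p) u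
      ≤ ENNReal.ofReal (2 * C) *
          distWeightedEnergy μ Ω q (β - p + q) (fderiv ℝ fun x => |u x| ^ (p / q)) := by
        rw [two_mul, ENNReal.ofReal_add hC.le hC.le, add_mul]
        exact add_le_add hlow hlow
    _ ≤ distWeightedEnergy μ Ω p (β - p) u + ENNReal.ofReal ((2 * C * (p / q) ^ q) ^ (p / q)) *
          distWeightedEnergy μ Ω p β (fderiv ℝ u) :=
        mul_distWeightedEnergy_fderiv_abs_rpow_le hΩ hΩc hq hqp (by positivity) hu

end SelfImprovement

theorem hardy_of_upper_assouad_codim_lt_general {E : Type*} [NormedAddCommGroup E]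
    [NormedSpace ℝ E] [FiniteDimensional ℝ E] [MeasurableSpace E] [BorelSpace E] {μ : Measure E}
    [μ.IsAddHaarMeasure] {Ω : Set E} {p β s c₀ : ℝ} (hp : 1 ≤ p) (hβ : β < p - 1)
    (hΩ : IsOpen Ω) (hΩc : Ωᶜ.Nonempty) (hs : s < p - β) (hc₀ : 0 < c₀)
    (hthick : UpperAssouadCodimBound μ Ωᶜ s c₀) : AdmitsHardyInequality μ Ω p β := by
  have hone : AdmitsHardyInequality μ Ω 1 (β - p + 1) :=
    admitsHardyInequality_one hΩ hΩc (by linarith) (by linarith) hc₀ hthick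
  obtain rfl | hp := hp.eq_or_lt
  · rwa [sub_add_cancel] at hone
  · exact hone.of_lt_exponent hΩ hΩc one_pos hp

/-- Euclidean case of Theorem 1.2: if the upper Assouad codimension of
`Ωᶜ` is less than `p - β` (with `β < p - 1`) and `Ωᶜ` is unbounded, then `Ω` admits a
`(p,β)`-Hardy inequality. -/
theorem hardy_of_upper_assouad_codim_lt
    (n : ℕ) (hn : 1 ≤ n) (p β : ℝ) (hp : 1 < p) (hβ : β < p - 1)
    (Ω : Set (EuclideanSpace ℝ (Fin n))) (hΩopen : IsOpen Ω) (hΩc : Ωᶜ.Nonempty)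
    (hΩcUnb : ¬ Bornology.IsBounded Ωᶜ)
    (s c₀ : ℝ) (hs0 : 0 ≤ s) (hs : s < p - β) (hc₀ : 0 < c₀)
    (hthick : ∀ x ∈ Ωᶜ, ∀ r R : ℝ, 0 < r → r < R →
      ENNReal.ofReal (c₀ * (r / R) ^ s) * volume (Metric.closedBall x R) ≤
        volume (Metric.thickening r Ωᶜ ∩ Metric.closedBall x R)) :
    ∃ C : ℝ, 0 < C ∧ ∀ u : EuclideanSpace ℝ (Fin n) → ℝ,
      (∃ L : NNReal, LipschitzWith L u) → HasCompactSupport u → tsupport u ⊆ Ω →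
      ∫⁻ x in Ω, ENNReal.ofReal (|u x| ^ p * Metric.infDist x Ωᶜ ^ (β - p)) ≤
        ENNReal.ofReal C *
          ∫⁻ x in Ω, ENNReal.ofReal (‖fderiv ℝ u x‖ ^ p * Metric.infDist x Ωᶜ ^ β) :=
  hardy_of_upper_assouad_codim_lt_general hp.le hβ hΩopen hΩc hs hc₀ hthick
end

section
/- Let n ≥ 1, 1 ≤ p < ∞ and β < 0, and let Ω ⊆ ℝⁿ be an open set with nonempty complement such that there exist t > p − β and C_A ≥ 1 with |(Ω^c)_r ∩ B(x,R)| ≤ C_A (r/R)^t |B(x,R)| for every x ∈ Ω^c and all 0 < r < R < ∞ (i.e. the lower Assouad codimension of Ω^c exceeds p − β). Then there exists C > 0 such that ∫_Ω |u(x)|^p d_Ω(x)^{β−p} dx ≤ C ∫_Ω ‖∇u(x)‖^p d_Ω(x)^β dx for every Lipschitz function u : ℝⁿ → ℝ for which the set {x ∈ Ω : u(x) ≠ 0} is bounded (u is not required to vanish on Ω^c). Moreover, if the neighborhood bound holds with some exponent t > p (i.e. the lower Assouad codimension of Ω^c exceeds p), then there exist β̃ < 0 and C* > 0 such that for every β ∈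 (β̃, 0) the above inequality holds for all such u with the constant C = C*/|β|. -/
open MeasureTheory Metric ENNReal

/-!
Write `d` for the distance to the complement of `Ω`. As `u` vanishes far away along almost every
ray `s ↦ x + s • d x • v`, the value `|u x|` is at most the integral of `d x * ‖∇u‖` along it, and
Hölder's inequality with the weight `(1 + s) ^ (1 + ε)` bounds `|u x| ^ p`. Averaging over `v` in
the unit ball and applying Fubini moves all the weight onto `‖∇u y‖ ^ p`: what remains is, for each
`s`, the integral of `d x ^ (β - n)` over the set of `x` with `dist x y < s * d x`. On that set
`d x ≥ d y / (1 + s)`, and the codimension bound on the dyadic layers of `d` shows that the integral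
is at most a multiple of `s ^ n * (1 + s) ^ (-t - β) * d y ^ β`. The layers form a geometric series
of ratio `2 ^ β`, which is where `1 / |β|` comes from; the remaining integral in `s` converges for
small `ε` exactly when `t + β > p`.
-/

section Integration

theorem lintegral_rpow_le_lintegral_inv_rpow_mul {α : Type*} [MeasurableSpace α] {μ : Measure α}
    {p : ℝ} (hp : 1 ≤ p) {f w : α → ℝ≥0∞} (hf : AEMeasurable f μ) (hw : AEMeasurable w μ)
    (hw_zero : ∀ᵐ a ∂μ, w a ≠ 0) (hw_top : ∀ᵐ a ∂μ, w a ≠ ∞) :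
    (∫⁻ a, f a ∂μ) ^ p ≤ (∫⁻ a, (w a)⁻¹ ∂μ) ^ (p - 1) * ∫⁻ a, w a ^ (p - 1) * f a ^ p ∂μ := by
  have hp_pos : 0 < p := by linarith
  have factor : ∀ᵐ a ∂μ,
      f a = (w a)⁻¹ ^ ((p - 1) / p) * (w a ^ (p - 1) * f a ^ p) ^ (1 / p) := by
    filter_upwards [hw_zero, hw_top] with a h0 htop
    rw [ENNReal.mul_rpow_of_nonneg _ _ (by positivity), ← ENNReal.rpow_mul, ← ENNReal.rpow_mul,
      mul_one_div, mul_one_div_cancel hp_pos.ne', ENNReal.rpow_one, ENNReal.inv_rpow, ← mul_assoc,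
      ENNReal.inv_mul_cancel (by simp [ENNReal.rpow_eq_zero_iff, h0, htop])
        (by simp [ENNReal.rpow_eq_top_iff, h0, htop]), one_mul]
  have holder := ENNReal.lintegral_mul_norm_pow_le (μ := μ) hw.inv
    ((hw.pow_const (p - 1)).mul (hf.pow_const p)) (p := (p - 1) / p) (q := 1 / p)
    (div_nonneg (by linarith) hp_pos.le) (by positivity) (by field_simp; ring)
  calc (∫⁻ a, f a ∂μ) ^ p
      ≤ ((∫⁻ a, (w a)⁻¹ ∂μ) ^ ((p - 1) / p) *
          (∫⁻ a, w a ^ (p - 1) * f a ^ p ∂μ) ^ (1 / p)) ^ p := by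
        rw [lintegral_congr_ae factor]
        exact ENNReal.rpow_le_rpow holder hp_pos.le
    _ = _ := by
        rw [ENNReal.mul_rpow_of_nonneg _ _ hp_pos.le, ← ENNReal.rpow_mul, ← ENNReal.rpow_mul,
          div_mul_cancel₀ _ hp_pos.ne', one_div_mul_cancel hp_pos.ne', ENNReal.rpow_one]

theorem lintegral_Ioi_one_add_rpow {ε : ℝ} (hε : 0 < ε) :
    ∫⁻ s in Set.Ioi (0 : ℝ), ENNReal.ofReal ((1 + s) ^ (-1 - ε)) = ENNReal.ofReal (1 / ε) := by
  have shift := (measurePreserving_add_left (volume : Measure ℝ) 1).setLIntegral_comp_preimage_emb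
    (measurableEmbedding_addLeft 1) (fun s ↦ ENNReal.ofReal (s ^ (-1 - ε))) (Set.Ioi 1)
  rw [Set.preimage_const_add_Ioi, sub_self] at shift
  rw [shift, ← ofReal_integral_eq_lintegral_ofReal
      (integrableOn_Ioi_rpow_of_lt (by linarith) one_pos),
    integral_Ioi_rpow_of_lt (by linarith) one_pos, Real.one_rpow, show -1 - ε + 1 = -ε by ring,
    neg_div_neg_eq]
  filter_upwards [ae_restrict_mem measurableSet_Ioi] with s hs
  exact Real.rpow_nonneg (zero_le_one.trans hs.le) _

theorem lintegral_lintegral_lintegral_rotate {α β γ : Type*} [MeasurableSpace α]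
    [MeasurableSpace β] [MeasurableSpace γ] {μ : Measure α} {ν : Measure β} {ρ : Measure γ}
    [SFinite μ] [SFinite ν] [SFinite ρ] {f : α → β → γ → ℝ≥0∞}
    (hf : Measurable fun z : (α × β) × γ ↦ f z.1.1 z.1.2 z.2) :
    ∫⁻ x, ∫⁻ y, ∫⁻ z, f x y z ∂ρ ∂ν ∂μ = ∫⁻ z, ∫⁻ x, ∫⁻ y, f x y z ∂ν ∂μ ∂ρ := by
  calc ∫⁻ x, ∫⁻ y, ∫⁻ z, f x y z ∂ρ ∂ν ∂μ
      = ∫⁻ xy, ∫⁻ z, f xy.1 xy.2 z ∂ρ ∂(μ.prod ν) :=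
        (lintegral_prod _ hf.lintegral_prod_right'.aemeasurable).symm
    _ = ∫⁻ z, ∫⁻ xy, f xy.1 xy.2 z ∂(μ.prod ν) ∂ρ := lintegral_lintegral_swap hf.aemeasurable
    _ = _ := lintegral_congr fun z ↦
        lintegral_prod _ (hf.comp (measurable_id.prodMk measurable_const)).aemeasurable

theorem lintegral_mul_setLIntegral_ball {X : Type*} [PseudoMetricSpace X] [MeasurableSpace X]
    [OpensMeasurableSpace X] [SecondCountableTopology X] {μ : Measure X} [SFinite μ]
    {ρ : X → ℝ} (hρ : Measurable ρ) {f g : X → ℝ≥0∞} (hf : Measurable f) (hg : Measurable g) :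
    ∫⁻ x, f x * ∫⁻ y in ball x (ρ x), g y ∂μ ∂μ =
      ∫⁻ y, (∫⁻ x in {x | dist x y < ρ x}, f x ∂μ) * g y ∂μ := by
  let near : Set (X × X) := {z | dist z.1 z.2 < ρ z.1}
  have near_meas : MeasurableSet near :=
    measurableSet_lt (by fun_prop) (by fun_prop)
  let kernel : X → X → ℝ≥0∞ := fun x y ↦ near.indicator (fun z ↦ f z.1 * g z.2) (x, y)
  have kernel_meas : Measurable (Function.uncurry kernel) :=
    Measurable.indicator (by fun_prop) near_meas
  calc ∫⁻ x, f x * ∫⁻ y in ball x (ρ x), g y ∂μ ∂μ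
      = ∫⁻ x, ∫⁻ y, kernel x y ∂μ ∂μ := by
        refine lintegral_congr fun x ↦ ?_
        rw [← lintegral_const_mul _ hg, ← lintegral_indicator measurableSet_ball]
        simp only [kernel, near, Set.indicator, mem_ball, Set.mem_ofPred_eq, dist_comm x]
    _ = ∫⁻ y, ∫⁻ x, kernel x y ∂μ ∂μ := lintegral_lintegral_swap kernel_meas.aemeasurable
    _ = _ := by
        refine lintegral_congr fun y ↦ ?_
        rw [← lintegral_mul_const _ hf,
          ← lintegral_indicator (measurableSet_lt (by fun_prop) hρ)]
        rfl

theorem ofReal_norm_rpow_mul {V : Type*} [SeminormedAddCommGroup V] {p : ℝ} (hp : 0 ≤ p) (a : V)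
    (b : ℝ) : ENNReal.ofReal (‖a‖ ^ p * b) = ‖a‖ₑ ^ p * ENNReal.ofReal b := by
  rw [ENNReal.ofReal_mul (by positivity), ← ENNReal.ofReal_rpow_of_nonneg (norm_nonneg _) hp,
    ofReal_norm]

end Integration

section Haar

variable {E : Type*} [NormedAddCommGroup E] [NormedSpace ℝ E] [FiniteDimensional ℝ E]
  [MeasurableSpace E] [BorelSpace E] (μ : Measure E) [μ.IsAddHaarMeasure]

theorem setLIntegral_unitBall_comp_add_smul (g : E → ℝ≥0∞) (x : E) {r : ℝ} (hr : 0 < r) :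
    ∫⁻ v in ball 0 1, g (x + r • v) ∂μ =
      ENNReal.ofReal (r ^ Module.finrank ℝ E)⁻¹ * ∫⁻ y in ball x r, g y ∂μ := by
  have emb : MeasurableEmbedding fun v : E ↦ x + r • v :=
    (measurableEmbedding_addLeft x).comp (measurableEmbedding_const_smul₀ hr.ne')
  have map_eq : μ.map (fun v ↦ x + r • v) =
      ENNReal.ofReal (r ^ Module.finrank ℝ E)⁻¹ • μ := by
    change μ.map ((x + ·) ∘ (r • ·)) = _
    rw [← Measure.map_map (by fun_prop) (by fun_prop), Measure.map_addHaar_smul μ hr.ne',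
      Measure.map_smul, map_add_left_eq_self,
      abs_of_pos (by positivity)]
  have preimage_ball : (fun v : E ↦ x + r • v) ⁻¹' ball x r = ball 0 1 := by
    ext v
    simp [norm_smul, abs_of_pos hr, mul_lt_iff_lt_one_right hr]
  rw [← preimage_ball, ← emb.lintegral_map, ← emb.restrict_map, map_eq, Measure.restrict_smul,
    lintegral_smul_measure, smul_eq_mul]

variable {μ}

theorem ae_ae_add_smul {P : E → Prop} (hP_meas : MeasurableSet {y | P y}) (hP : ∀ᵐ y ∂μ, P y)
    (x : E) : ∀ᵐ v ∂μ, ∀ᵐ s ∂volume.restrict (Set.Ioi (0 : ℝ)), P (x + s • v) := by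
  have meas : Measurable fun z : E × ℝ ↦ x + z.2 • z.1 := by fun_prop
  refine (Measure.ae_ae_comm (p := fun v s ↦ P (x + s • v)) (meas hP_meas)).2 ?_
  filter_upwards [ae_restrict_mem measurableSet_Ioi] with s hs
  exact ((measurePreserving_add_left μ x).quasiMeasurePreserving.comp
    (Measure.quasiMeasurePreserving_smul μ (ne_of_gt hs))).ae hP

end Haar

section Ray

variable {E : Type*} [NormedAddCommGroup E] [NormedSpace ℝ E]

theorem isBounded_support_of_dense {X : Type*} [PseudoMetricSpace X] {Ω : Set X} (hΩ : Dense Ω)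
    {u : X → ℝ} (hu : Continuous u) (hb : Bornology.IsBounded {x ∈ Ω | u x ≠ 0}) :
    Bornology.IsBounded (Function.support u) := by
  refine hb.closure.subset ((hΩ.open_subset_closure_inter hu.isOpen_support).trans ?_)
  exact closure_mono fun x hx ↦ ⟨hx.2, hx.1⟩

theorem exists_pos_ray_eq_zero {u : E → ℝ} (hu : Bornology.IsBounded (Function.support u)) (x : E)
    {v : E} (hv : v ≠ 0) : ∃ S : ℝ, 0 < S ∧ u (x + S • v) = 0 := by
  obtain ⟨R, hR_pos, hR⟩ := hu.subset_ball_lt 0 x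
  have hv_pos : 0 < ‖v‖ := norm_pos_iff.2 hv
  refine ⟨R / ‖v‖, by positivity, Function.notMem_support.1 fun h ↦ ?_⟩
  have := mem_ball.1 (hR h)
  rw [dist_self_add_left, norm_smul, Real.norm_of_nonneg (by positivity),
    div_mul_cancel₀ _ hv_pos.ne'] at this
  exact this.false

variable {L : NNReal} {u : E → ℝ}

theorem enorm_le_lintegral_enorm_fderiv_ray (hu : LipschitzWith L u)
    (hu_supp : Bornology.IsBounded (Function.support u)) {x v : E} (hv : v ≠ 0)
    (hdiff : ∀ᵐ s ∂volume.restrict (Set.Ioi (0 : ℝ)), DifferentiableAt ℝ u (x + s • v)) :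
    ‖u x‖ₑ ≤ ∫⁻ s in Set.Ioi (0 : ℝ), ‖v‖ₑ * ‖fderiv ℝ u (x + s • v)‖ₑ := by
  obtain ⟨S, hS, hzero⟩ := exists_pos_ray_eq_zero hu_supp x hv
  let h : ℝ → ℝ := u ∘ fun s ↦ x + s • v
  have line_lip : LipschitzWith ‖v‖₊ fun s : ℝ ↦ x + s • v :=
    LipschitzWith.of_dist_le_mul fun a b ↦ by
      rw [dist_add_left, dist_eq_norm, ← sub_smul, norm_smul, Real.dist_eq, mul_comm,
        coe_nnnorm, Real.norm_eq_abs]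
  have ftc : ∫ s in (0 : ℝ)..S, deriv h s = -u x := by
    rw [((hu.comp line_lip).lipschitzOnWith.absolutelyContinuousOnInterval).integral_deriv_eq_sub]
    simp [hzero]
  calc ‖u x‖ₑ = ‖∫ s in Set.Ioc 0 S, deriv h s‖ₑ := by
        rw [← intervalIntegral.integral_of_le hS.le, ftc, enorm_neg]
    _ ≤ ∫⁻ s in Set.Ioc 0 S, ‖deriv h s‖ₑ := enorm_integral_le_lintegral_enorm _
    _ ≤ ∫⁻ s in Set.Ioi 0, ‖deriv h s‖ₑ := lintegral_mono_set Set.Ioc_subset_Ioi_self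
    _ ≤ _ := by
        refine lintegral_mono_ae ?_
        filter_upwards [hdiff] with s hs
        have line_deriv : HasDerivAt (fun s : ℝ ↦ x + s • v) v s := by
          simpa using ((hasDerivAt_id s).smul_const v).const_add x
        rw [(hs.hasFDerivAt.comp_hasDerivAt s line_deriv).deriv, mul_comm]
        exact ContinuousLinearMap.le_opENorm _ _

variable [MeasurableSpace E] [BorelSpace E] {p ε : ℝ}

theorem enorm_rpow_le_lintegral_enorm_fderiv_ray (hp : 1 ≤ p) (hε : 0 < ε)
    (hu : LipschitzWith L u) (hu_supp : Bornology.IsBounded (Function.support u)) {x v : E}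
    (hv : v ≠ 0)
    (hdiff : ∀ᵐ s ∂volume.restrict (Set.Ioi (0 : ℝ)), DifferentiableAt ℝ u (x + s • v)) :
    ‖u x‖ₑ ^ p ≤ ENNReal.ofReal (1 / ε) ^ (p - 1) * ∫⁻ s in Set.Ioi (0 : ℝ),
      ENNReal.ofReal ((1 + s) ^ ((1 + ε) * (p - 1))) *
        (‖v‖ₑ * ‖fderiv ℝ u (x + s • v)‖ₑ) ^ p := by
  let w : ℝ → ℝ≥0∞ := fun s ↦ ENNReal.ofReal ((1 + s) ^ (1 + ε))
  have w_meas : Measurable w := by fun_prop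
  have grad_meas : Measurable fun s : ℝ ↦ ‖v‖ₑ * ‖fderiv ℝ u (x + s • v)‖ₑ :=
    ((measurable_fderiv ℝ u).enorm.comp (by fun_prop)).const_mul _
  have w_ne_zero : ∀ᵐ s ∂volume.restrict (Set.Ioi (0 : ℝ)), w s ≠ 0 := by
    filter_upwards [ae_restrict_mem measurableSet_Ioi] with s (hs : 0 < s)
    exact (ENNReal.ofReal_pos.2 (by positivity)).ne'
  have lintegral_w_inv : ∫⁻ s in Set.Ioi (0 : ℝ), (w s)⁻¹ = ENNReal.ofReal (1 / ε) := by
    rw [← lintegral_Ioi_one_add_rpow hε]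
    refine setLIntegral_congr_fun measurableSet_Ioi fun s (hs : 0 < s) ↦ ?_
    rw [← ENNReal.ofReal_inv_of_pos (by positivity), ← Real.rpow_neg (by positivity), neg_add']
  calc ‖u x‖ₑ ^ p
      ≤ (∫⁻ s in Set.Ioi (0 : ℝ), ‖v‖ₑ * ‖fderiv ℝ u (x + s • v)‖ₑ) ^ p := by
        gcongr
        exact enorm_le_lintegral_enorm_fderiv_ray hu hu_supp hv hdiff
    _ ≤ _ := lintegral_rpow_le_lintegral_inv_rpow_mul hp grad_meas.aemeasurable
          w_meas.aemeasurable w_ne_zero (.of_forall fun _ ↦ ENNReal.ofReal_ne_top)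
    _ = _ := by
        rw [lintegral_w_inv]
        congr 1
        refine setLIntegral_congr_fun measurableSet_Ioi fun s (hs : 0 < s) ↦ ?_
        rw [ENNReal.ofReal_rpow_of_pos (by positivity), ← Real.rpow_mul (by positivity)]

variable [FiniteDimensional ℝ E] {μ : Measure E} [μ.IsAddHaarMeasure]

theorem measure_unitBall_mul_enorm_rpow_le [Nontrivial E] (hp : 1 ≤ p) (hε : 0 < ε)
    (hu : LipschitzWith L u) (hu_supp : Bornology.IsBounded (Function.support u)) (x : E)
    {d : ℝ} (hd : 0 < d) (β : ℝ) :
    μ (ball 0 1) * (‖u x‖ₑ ^ p * ENNReal.ofReal (d ^ (β - p))) ≤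
      ENNReal.ofReal (1 / ε) ^ (p - 1) * ∫⁻ v in ball 0 1, (∫⁻ s in Set.Ioi (0 : ℝ),
        ENNReal.ofReal ((1 + s) ^ ((1 + ε) * (p - 1))) *
          (ENNReal.ofReal (d ^ β) * ‖fderiv ℝ u (x + (s * d) • v)‖ₑ ^ p)) ∂μ := by
  have hdiff : ∀ᵐ v ∂μ, ∀ᵐ s ∂volume.restrict (Set.Ioi (0 : ℝ)),
      DifferentiableAt ℝ u (x + s • d • v) :=
    (Measure.quasiMeasurePreserving_smul μ hd.ne').ae
      (ae_ae_add_smul (measurableSet_of_differentiableAt ℝ u) hu.ae_differentiableAt x)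
  have hne : ∀ᵐ v ∂μ, v ≠ 0 := compl_mem_ae_iff.2 (measure_singleton 0)
  have weight : ENNReal.ofReal (d ^ β) = ENNReal.ofReal d ^ p * ENNReal.ofReal (d ^ (β - p)) := by
    rw [ENNReal.ofReal_rpow_of_pos hd, ← ENNReal.ofReal_mul (by positivity), ← Real.rpow_add hd,
      add_sub_cancel]
  rw [mul_comm, ← setLIntegral_const,
    ← lintegral_const_mul' _ _ (ENNReal.rpow_ne_top_of_nonneg (by linarith) ENNReal.ofReal_ne_top)]
  refine lintegral_mono_ae ?_
  filter_upwards [ae_restrict_of_ae hdiff, ae_restrict_of_ae hne,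
    ae_restrict_mem measurableSet_ball] with v hv_diff hv_ne hv_ball
  have enorm_le : ‖d • v‖ₑ ≤ ENNReal.ofReal d := by
    rw [← ofReal_norm, norm_smul, Real.norm_of_nonneg hd.le]
    exact ENNReal.ofReal_le_ofReal (mul_le_of_le_one_right hd.le (mem_ball_zero_iff.1 hv_ball).le)
  refine (mul_le_mul_left (enorm_rpow_le_lintegral_enorm_fderiv_ray hp hε hu hu_supp
    (smul_ne_zero hd.ne' hv_ne) hv_diff) _).trans ?_
  rw [mul_assoc, ← lintegral_mul_const' _ _ ENNReal.ofReal_ne_top]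
  gcongr _ * ?_
  refine lintegral_mono fun s ↦ ?_
  rw [ENNReal.mul_rpow_of_nonneg _ _ (by linarith), smul_smul, weight, mul_assoc,
    mul_right_comm (‖d • v‖ₑ ^ p)]
  gcongr

end Ray

section AssouadCodimBound

variable {X : Type*} [PseudoMetricSpace X] [MeasurableSpace X]

/-- The volume bound for the neighbourhoods of `F` that defines the lower Assouad codimension:
the latter is the supremum of the `t` for which the bound holds with some constant `C`. -/
def AssouadCodimBound (μ : Measure X) (F : Set X) (t C : ℝ) : Prop :=
  ∀ x ∈ F, ∀ r R : ℝ, 0 < r → r < R →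
    μ (thickening r F ∩ closedBall x R) ≤ ENNReal.ofReal (C * (r / R) ^ t) * μ (closedBall x R)

variable {μ : Measure X} {F : Set X} {t C : ℝ}

theorem AssouadCodimBound.const_pos [μ.IsOpenPosMeasure] (h : AssouadCodimBound μ F t C)
    (hF : F.Nonempty) : 0 < C := by
  obtain ⟨x, hx⟩ := hF
  have ball_subset : ball x 1 ⊆ thickening 1 F ∩ closedBall x 2 := fun y hy ↦
    ⟨mem_thickening_iff.2 ⟨x, hx, hy⟩, ball_subset_closedBall (ball_subset_ball one_le_two hy)⟩
  have bound_pos : 0 < ENNReal.ofReal (C * (1 / 2) ^ t) * μ (closedBall x 2) :=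
    (measure_ball_pos μ x one_pos).trans_le
      ((measure_mono ball_subset).trans (h x hx 1 2 one_pos one_lt_two))
  have := ENNReal.ofReal_pos.1 (pos_of_mul_pos_left bound_pos zero_le)
  exact pos_of_mul_pos_left this (by positivity)

theorem AssouadCodimBound.measure_closure_inter_closedBall_eq_zero [ProperSpace X]
    [IsFiniteMeasureOnCompacts μ] (h : AssouadCodimBound μ F t C) (ht : 0 < t) {x : X}
    (hx : x ∈ F) {R : ℝ} (hR : 0 < R) : μ (closure F ∩ closedBall x R) = 0 := by
  have bound : ∀ᶠ r in nhdsWithin (0 : ℝ) (Set.Ioi 0),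
      μ (closure F ∩ closedBall x R) ≤
        ENNReal.ofReal (C * (r / R) ^ t) * μ (closedBall x R) := by
    filter_upwards [Ioo_mem_nhdsGT hR] with r hr
    exact (measure_mono (Set.inter_subset_inter_left _ (closure_subset_thickening hr.1 F))).trans
      (h x hx r R hr.1 hr.2)
  have bound_tendsto : Filter.Tendsto
      (fun r : ℝ ↦ ENNReal.ofReal (C * (r / R) ^ t) * μ (closedBall x R))
      (nhdsWithin 0 (Set.Ioi 0))
      (nhds (ENNReal.ofReal (C * (0 / R) ^ t) * μ (closedBall x R))) := by
    refine ENNReal.Tendsto.mul_const ?_ (Or.inr measure_closedBall_lt_top.ne)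
    have cont : Continuous fun r : ℝ ↦ C * (r / R) ^ t :=
      continuous_const.mul ((continuous_id.div_const R).rpow_const fun _ ↦ Or.inr ht.le)
    exact (ENNReal.tendsto_ofReal (cont.tendsto 0)).mono_left nhdsWithin_le_nhds
  simpa [Real.zero_rpow ht.ne'] using ge_of_tendsto bound_tendsto bound

theorem AssouadCodimBound.ae_infDist_pos [ProperSpace X] [IsFiniteMeasureOnCompacts μ]
    (h : AssouadCodimBound μ F t C) (ht : 0 < t) (hF : F.Nonempty) :
    ∀ᵐ x ∂μ, 0 < infDist x F := by
  obtain ⟨z, hz⟩ := hF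
  have closure_null : μ (closure F) = 0 := by
    rw [← Set.inter_univ (closure F), ← iUnion_closedBall_nat z, Set.inter_iUnion]
    refine measure_iUnion_null fun N ↦ measure_mono_null ?_
      (h.measure_closure_inter_closedBall_eq_zero ht hz (R := N + 1) (by positivity))
    exact Set.inter_subset_inter_right _ (closedBall_subset_closedBall (by linarith))
  filter_upwards [compl_mem_ae_iff.2 closure_null] with x hx
  exact (infDist_pos_iff_notMem_closure ⟨z, hz⟩).1 hx

end AssouadCodimBound

section Shadow

section PseudoMetric

variable {X : Type*} [PseudoMetricSpace X]

/-- The points `x` whose ball of radius `s * dist(x, F)` contains `y`: this is the section at `y`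
of the region over which balls of radius proportional to the distance to `F` are averaged. -/
def shadow (F : Set X) (s : ℝ) (y : X) : Set X :=
  {x | dist x y < s * infDist x F}

variable {F : Set X} {s : ℝ} {x y : X}

theorem measurableSet_shadow [MeasurableSpace X] [OpensMeasurableSpace X] :
    MeasurableSet (shadow F s y) :=
  measurableSet_lt (by fun_prop) (by fun_prop)

theorem infDist_le_of_mem_shadow (hx : x ∈ shadow F s y) :
    infDist y F ≤ (1 + s) * infDist x F := by
  have := infDist_le_infDist_add_dist (s := F) (x := y) (y := x)
  have : dist x y < s * infDist x F := hx
  linarith [dist_comm x y]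

theorem shadow_subset_ball (hs : 0 ≤ s) (hs_half : s ≤ 1 / 2) :
    shadow F s y ⊆ ball y (2 * s * infDist y F) := by
  intro x hx
  have hx : dist x y < s * infDist x F := hx
  have lipschitz : infDist x F ≤ infDist y F + dist x y := infDist_le_infDist_add_dist
  have comparable : infDist x F ≤ 2 * infDist y F := by
    nlinarith [infDist_nonneg (x := x) (s := F)]
  rw [mem_ball]
  nlinarith

theorem shadow_subset_iUnion_dyadic {a : ℝ} (ha : 0 < a) (hs : 0 ≤ s)
    (hay : (1 + s) * a ≤ infDist y F) :
    shadow F s y ⊆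
      ⋃ j : ℕ, {x ∈ shadow F s y | infDist x F ∈ Set.Ico (2 ^ j * a) (2 * (2 ^ j * a))} := by
  intro x hx
  have a_le : a ≤ infDist x F :=
    le_of_mul_le_mul_left (hay.trans (infDist_le_of_mem_shadow hx)) (by positivity)
  obtain ⟨j, hj_le, hj_lt⟩ :=
    exists_nat_pow_near ((one_le_div ha).2 a_le) (one_lt_two : (1 : ℝ) < 2)
  rw [le_div_iff₀ ha] at hj_le
  rw [div_lt_iff₀ ha, pow_succ', mul_assoc] at hj_lt
  exact Set.mem_iUnion.2 ⟨j, hx, hj_le, hj_lt⟩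

theorem shadow_layer_subset {z : X} (hz : z ∈ F) {a : ℝ} (ha : 0 < a) (hs : 0 ≤ s)
    (hyz : dist y z < 2 * ((1 + s) * a)) :
    {x ∈ shadow F s y | infDist x F ∈ Set.Ico a (2 * a)} ⊆
      thickening (4 * a) F ∩ closedBall z (4 * ((1 + s) * a)) := by
  rintro x ⟨hx, -, hx_lt⟩
  have hx : dist x y < s * infDist x F := hx
  refine ⟨(mem_thickening_iff_infDist_lt ⟨z, hz⟩).2 (by linarith), mem_closedBall.2 ?_⟩
  nlinarith [dist_triangle x y z]

end PseudoMetric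

theorem hasSum_two_pow_mul_rpow {a β : ℝ} (ha : 0 ≤ a) (hβ : β < 0) :
    HasSum (fun j : ℕ ↦ (2 ^ j * a) ^ β) (a ^ β / (1 - 2 ^ β)) := by
  have lt_one : (2 : ℝ) ^ β < 1 := Real.rpow_lt_one_of_one_lt_of_neg one_lt_two hβ
  have geometric (j : ℕ) : (2 ^ j * a) ^ β = a ^ β * (2 ^ β) ^ j := by
    rw [Real.mul_rpow (by positivity) ha, ← Real.rpow_natCast_mul zero_le_two,
      ← Real.rpow_mul_natCast zero_le_two, mul_comm, mul_comm β]
  simpa only [geometric, div_eq_mul_inv] using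
    (hasSum_geometric_of_lt_one (by positivity) lt_one).mul_left (a ^ β)

variable {E : Type*} [NormedAddCommGroup E] [NormedSpace ℝ E] [FiniteDimensional ℝ E]
  [MeasurableSpace E] [BorelSpace E] {μ : Measure E} [μ.IsAddHaarMeasure]
  {F : Set E} {t C β s : ℝ} {y : E}

local notation "dim" => Module.finrank ℝ E

theorem setLIntegral_shadow_le_of_le_half (hβ : β ≤ 0) (hy : 0 < infDist y F) (hs : 0 < s)
    (hs_half : s ≤ 1 / 2) :
    ∫⁻ x in shadow F s y, ENNReal.ofReal (infDist x F ^ (β - dim)) ∂μ ≤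
      ENNReal.ofReal (3 ^ dim * (3 / 2) ^ (-β) * s ^ dim * infDist y F ^ β) * μ (ball 0 1) := by
  set D := infDist y F
  calc ∫⁻ x in shadow F s y, ENNReal.ofReal (infDist x F ^ (β - dim)) ∂μ
      ≤ ∫⁻ _ in shadow F s y, ENNReal.ofReal ((2 / 3 * D) ^ (β - dim)) ∂μ := by
        refine setLIntegral_mono' measurableSet_shadow fun x hx ↦ ENNReal.ofReal_le_ofReal ?_
        have lower : D ≤ (1 + s) * infDist x F := infDist_le_of_mem_shadow hx
        refine Real.rpow_le_rpow_of_nonpos (by positivity) ?_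
          (by linarith [Nat.cast_nonneg (α := ℝ) dim])
        nlinarith [infDist_nonneg (x := x) (s := F)]
    _ = ENNReal.ofReal ((2 / 3 * D) ^ (β - dim)) * μ (shadow F s y) := setLIntegral_const _ _
    _ ≤ ENNReal.ofReal ((2 / 3 * D) ^ (β - dim)) * μ (ball y (2 * s * D)) := by
        gcongr
        exact shadow_subset_ball hs.le hs_half
    _ = _ := by
        rw [Measure.addHaar_ball_of_pos _ _ (by positivity), ← mul_assoc,
          ← ENNReal.ofReal_mul (by positivity)]
        congr 2
        rw [Real.rpow_sub (by positivity), Real.mul_rpow (by positivity) hy.le, Real.rpow_natCast,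
          Real.rpow_neg (by positivity), ← Real.inv_rpow (by positivity), inv_div]
        have : (3 : ℝ) ^ dim * (2 / 3) ^ dim = 2 ^ dim := by rw [← mul_pow]; norm_num
        rw [mul_pow, mul_pow, mul_pow, ← this]
        field_simp

theorem AssouadCodimBound.setLIntegral_shadow_layer_le (h : AssouadCodimBound μ F t C)
    (hF : F.Nonempty) (hβ : β ≤ 0) {a : ℝ} (ha : 0 < a) (hs : 0 < s)
    (hy : infDist y F < 2 * ((1 + s) * a)) :
    ∫⁻ x in {x ∈ shadow F s y | infDist x F ∈ Set.Ico a (2 * a)},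
        ENNReal.ofReal (infDist x F ^ (β - dim)) ∂μ ≤
      ENNReal.ofReal (C * 4 ^ dim * (1 + s) ^ dim * (1 + s) ^ (-t) * a ^ β) * μ (ball 0 1) := by
  obtain ⟨z, hz, hyz⟩ := (infDist_lt_iff hF).1 hy
  set layer := {x ∈ shadow F s y | infDist x F ∈ Set.Ico a (2 * a)}
  have layer_meas : MeasurableSet layer :=
    measurableSet_shadow.inter ((measurable_infDist (s := F)) measurableSet_Ico)
  have layer_measure : μ layer ≤
      ENNReal.ofReal (C * (4 * a / (4 * ((1 + s) * a))) ^ t) *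
        μ (closedBall z (4 * ((1 + s) * a))) :=
    (measure_mono (shadow_layer_subset hz ha hs.le hyz)).trans
      (h z hz _ _ (by positivity) (by nlinarith))
  calc ∫⁻ x in layer, ENNReal.ofReal (infDist x F ^ (β - dim)) ∂μ
      ≤ ∫⁻ _ in layer, ENNReal.ofReal (a ^ (β - dim)) ∂μ :=
        setLIntegral_mono' layer_meas fun x hx ↦ ENNReal.ofReal_le_ofReal <|
          Real.rpow_le_rpow_of_nonpos ha hx.2.1 (by linarith [Nat.cast_nonneg (α := ℝ) dim])
    _ = ENNReal.ofReal (a ^ (β - dim)) * μ layer := setLIntegral_const _ _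
    _ ≤ _ := mul_le_mul_right layer_measure _
    _ = _ := by
        have hC : 0 < C := h.const_pos hF
        rw [Measure.addHaar_closedBall _ _ (by positivity), ← mul_assoc, ← mul_assoc,
          ← ENNReal.ofReal_mul (by positivity), ← ENNReal.ofReal_mul (by positivity)]
        congr 2
        rw [show 4 * a / (4 * ((1 + s) * a)) = (1 + s)⁻¹ by field_simp,
          Real.inv_rpow (by positivity), ← Real.rpow_neg (by positivity), Real.rpow_sub ha,
          Real.rpow_natCast, mul_pow, mul_pow]
        field_simp

theorem AssouadCodimBound.setLIntegral_shadow_le_dyadic (h : AssouadCodimBound μ F t C)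
    (hF : F.Nonempty) (hβ : β < 0) (hy : 0 < infDist y F) (hs : 0 < s) :
    ∫⁻ x in shadow F s y, ENNReal.ofReal (infDist x F ^ (β - dim)) ∂μ ≤
      ENNReal.ofReal (C * 4 ^ dim * (1 + s) ^ dim * (1 + s) ^ (-t - β) * infDist y F ^ β /
        (1 - 2 ^ β)) * μ (ball 0 1) := by
  have hC : 0 < C := h.const_pos hF
  set a := infDist y F / (1 + s) with ha_def
  have ha : 0 < a := by positivity
  have ha_mul : (1 + s) * a = infDist y F := by rw [ha_def]; field_simp
  set c := C * 4 ^ dim * (1 + s) ^ dim * (1 + s) ^ (-t) with hc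
  have y_lt (j : ℕ) : infDist y F < 2 * ((1 + s) * (2 ^ j * a)) := by
    have : (1 : ℝ) ≤ 2 ^ j := one_le_pow₀ one_le_two
    rw [mul_left_comm (1 + s), ha_mul]
    nlinarith
  have sum := (hasSum_two_pow_mul_rpow ha.le hβ).mul_left c
  calc ∫⁻ x in shadow F s y, ENNReal.ofReal (infDist x F ^ (β - dim)) ∂μ
      ≤ ∑' j : ℕ,
          ∫⁻ x in {x ∈ shadow F s y | infDist x F ∈ Set.Ico (2 ^ j * a) (2 * (2 ^ j * a))},
            ENNReal.ofReal (infDist x F ^ (β - dim)) ∂μ :=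
        (lintegral_mono_set (shadow_subset_iUnion_dyadic ha hs.le ha_mul.le)).trans
          (lintegral_iUnion_le _ _)
    _ ≤ ∑' j : ℕ, ENNReal.ofReal (c * (2 ^ j * a) ^ β) * μ (ball 0 1) :=
        ENNReal.tsum_le_tsum fun j ↦
          h.setLIntegral_shadow_layer_le hF hβ.le (by positivity) hs (y_lt j)
    _ = ENNReal.ofReal (c * (a ^ β / (1 - 2 ^ β))) * μ (ball 0 1) := by
        rw [ENNReal.tsum_mul_right, ← ENNReal.ofReal_tsum_of_nonneg (fun j ↦ by positivity)
          sum.summable, sum.tsum_eq]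
    _ = _ := by
        rw [hc, ha_def, Real.div_rpow hy.le (by positivity), sub_eq_add_neg (-t),
          Real.rpow_add (by positivity), Real.rpow_neg (x := 1 + s) (y := β) (by positivity)]
        congr 2
        ring

/-- The constant of the shadow estimate. It blows up like `1 / |β|` as `β → 0⁻`, which is where
the factor `1 / |β|` of the Hardy constant comes from. -/
noncomputable def shadowConst (n : ℕ) (t C β : ℝ) : ℝ :=
  (12 ^ n * C + 3 ^ n * (3 / 2) ^ t) / (1 - 2 ^ β)

theorem one_sub_two_rpow_pos (hβ : β < 0) : 0 < 1 - (2 : ℝ) ^ β :=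
  sub_pos.2 (Real.rpow_lt_one_of_one_lt_of_neg one_lt_two hβ)

theorem shadowConst_pos {n : ℕ} (hC : 0 < C) (hβ : β < 0) : 0 < shadowConst n t C β :=
  div_pos (by positivity) (one_sub_two_rpow_pos hβ)

theorem three_pow_mul_le_shadowConst {n : ℕ} (hC : 0 ≤ C) (hβ : β < 0) :
    3 ^ n * (3 / 2) ^ t ≤ shadowConst n t C β :=
  calc 3 ^ n * (3 / 2) ^ t ≤ 12 ^ n * C + 3 ^ n * (3 / 2) ^ t :=
        le_add_of_nonneg_left (by positivity)
    _ ≤ shadowConst n t C β :=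
        le_div_self (by positivity) (one_sub_two_rpow_pos hβ)
          (sub_le_self _ (Real.rpow_nonneg zero_le_two β))

theorem twelve_pow_mul_div_le_shadowConst {n : ℕ} (hβ : β < 0) :
    12 ^ n * C / (1 - 2 ^ β) ≤ shadowConst n t C β :=
  div_le_div_of_nonneg_right (le_add_of_nonneg_right (by positivity)) (one_sub_two_rpow_pos hβ).le

theorem AssouadCodimBound.setLIntegral_shadow_le (h : AssouadCodimBound μ F t C)
    (hF : F.Nonempty) (hβ : β < 0) (htβ : 0 ≤ t + β) (hy : 0 < infDist y F) (hs : 0 < s) :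
    ∫⁻ x in shadow F s y, ENNReal.ofReal (infDist x F ^ (β - dim)) ∂μ ≤
      ENNReal.ofReal (shadowConst dim t C β * s ^ dim * (1 + s) ^ (-t - β) * infDist y F ^ β) *
        μ (ball 0 1) := by
  have hC : 0 < C := h.const_pos hF
  have const_pos : 0 < shadowConst dim t C β := shadowConst_pos hC hβ
  rcases le_total s (1 / 2) with hs_half | hs_half
  · refine (setLIntegral_shadow_le_of_le_half hβ.le hy hs hs_half).trans ?_
    gcongr ENNReal.ofReal ?_ * _
    calc 3 ^ dim * (3 / 2) ^ (-β) * s ^ dim * infDist y F ^ β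
        = 3 ^ dim * (3 / 2) ^ t * s ^ dim * (3 / 2) ^ (-t - β) * infDist y F ^ β := by
          rw [show -β = t + (-t - β) by ring, Real.rpow_add (by norm_num)]; ring
      _ ≤ _ := by
          gcongr ?_ * _ * ?_ * _
          · exact three_pow_mul_le_shadowConst hC.le hβ
          · exact Real.rpow_le_rpow_of_nonpos (by positivity) (by linarith) (by linarith)
  · refine (h.setLIntegral_shadow_le_dyadic hF hβ hy hs).trans ?_
    have denom_pos := one_sub_two_rpow_pos hβ
    gcongr ENNReal.ofReal ?_ * _
    calc C * 4 ^ dim * (1 + s) ^ dim * (1 + s) ^ (-t - β) * infDist y F ^ β / (1 - 2 ^ β)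
        ≤ C * 4 ^ dim * (3 * s) ^ dim * (1 + s) ^ (-t - β) * infDist y F ^ β / (1 - 2 ^ β) := by
          gcongr; linarith
      _ = 12 ^ dim * C / (1 - 2 ^ β) * s ^ dim * (1 + s) ^ (-t - β) * infDist y F ^ β := by
          rw [show (12 : ℝ) = 4 * 3 by norm_num, mul_pow, mul_pow]; ring
      _ ≤ _ := by
          gcongr ?_ * _ * _ * _
          exact twelve_pow_mul_div_le_shadowConst hβ

end Shadow

section HardyInequality

variable {E : Type*} [NormedAddCommGroup E] [NormedSpace ℝ E] [MeasurableSpace E]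

/-- The `(p, β)`-Hardy inequality with constant `C` on `Ω`, for Lipschitz functions with bounded
support in `Ω`. Such functions extend to Lipschitz functions on the whole space, so they are
encoded as globally Lipschitz `u` for which only `{x ∈ Ω | u x ≠ 0}` is bounded. -/
def HardyInequality (μ : Measure E) (Ω : Set E) (p β C : ℝ) : Prop :=
  ∀ u : E → ℝ, (∃ L : NNReal, LipschitzWith L u) → Bornology.IsBounded {x ∈ Ω | u x ≠ 0} →
    ∫⁻ x in Ω, ENNReal.ofReal (|u x| ^ p * infDist x Ωᶜ ^ (β - p)) ∂μ ≤
      ENNReal.ofReal C * ∫⁻ x in Ω, ENNReal.ofReal (‖fderiv ℝ u x‖ ^ p * infDist x Ωᶜ ^ β) ∂μ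

theorem HardyInequality.mono {μ : Measure E} {Ω : Set E} {p β C C' : ℝ}
    (h : HardyInequality μ Ω p β C) (hC : C ≤ C') :
    HardyInequality μ Ω p β C' :=
  fun u hu hb ↦ (h u hu hb).trans (by gcongr)

end HardyInequality

section Hardy

variable {E : Type*} [NormedAddCommGroup E] [NormedSpace ℝ E] [FiniteDimensional ℝ E]
  [MeasurableSpace E] [BorelSpace E] {μ : Measure E} [μ.IsAddHaarMeasure]
  {F Ω : Set E} {t C β p ε s : ℝ}

local notation "dim" => Module.finrank ℝ E

theorem AssouadCodimBound.lintegral_unitBall_average_le (h : AssouadCodimBound μ F t C)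
    (hF : F.Nonempty) (hβ : β < 0) (htβ : 0 ≤ t + β) (hs : 0 < s) {g : E → ℝ≥0∞}
    (hg : Measurable g) :
    ∫⁻ x, ∫⁻ v in ball 0 1,
        ENNReal.ofReal (infDist x F ^ β) * g (x + (s * infDist x F) • v) ∂μ ∂μ ≤
      ENNReal.ofReal (shadowConst dim t C β * (1 + s) ^ (-t - β)) * μ (ball 0 1) *
        ∫⁻ y, g y * ENNReal.ofReal (infDist y F ^ β) ∂μ := by
  have hpos := h.ae_infDist_pos (by linarith) hF
  have const_pos : 0 < shadowConst dim t C β := shadowConst_pos (h.const_pos hF) hβ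
  calc ∫⁻ x, ∫⁻ v in ball 0 1,
          ENNReal.ofReal (infDist x F ^ β) * g (x + (s * infDist x F) • v) ∂μ ∂μ
      = ∫⁻ x, ENNReal.ofReal (s ^ dim)⁻¹ * (ENNReal.ofReal (infDist x F ^ (β - dim)) *
          ∫⁻ y in ball x (s * infDist x F), g y ∂μ) ∂μ := by
        refine lintegral_congr_ae ?_
        filter_upwards [hpos] with x hx
        rw [lintegral_const_mul' _ _ ENNReal.ofReal_ne_top,
          setLIntegral_unitBall_comp_add_smul μ g x (mul_pos hs hx), ← mul_assoc, ← mul_assoc,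
          ← ENNReal.ofReal_mul (by positivity), ← ENNReal.ofReal_mul (by positivity),
          Real.rpow_sub hx, Real.rpow_natCast, mul_pow]
        congr 2
        field_simp
    _ = ENNReal.ofReal (s ^ dim)⁻¹ *
          ∫⁻ y, (∫⁻ x in shadow F s y, ENNReal.ofReal (infDist x F ^ (β - dim)) ∂μ) * g y ∂μ := by
        rw [lintegral_const_mul' _ _ ENNReal.ofReal_ne_top,
          lintegral_mul_setLIntegral_ball (by fun_prop) (by fun_prop) hg]
        rfl
    _ ≤ ENNReal.ofReal (s ^ dim)⁻¹ *
          ∫⁻ y, ENNReal.ofReal (shadowConst dim t C β * s ^ dim * (1 + s) ^ (-t - β)) *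
            μ (ball 0 1) * (g y * ENNReal.ofReal (infDist y F ^ β)) ∂μ := by
        gcongr _ * ?_
        refine lintegral_mono_ae ?_
        filter_upwards [hpos] with y hy
        refine (mul_le_mul_left (h.setLIntegral_shadow_le hF hβ htβ hy hs) _).trans_eq ?_
        rw [ENNReal.ofReal_mul (by positivity)]
        ring
    _ = _ := by
        rw [lintegral_const_mul' _ _ (ENNReal.mul_ne_top ENNReal.ofReal_ne_top
          measure_ball_lt_top.ne), ← mul_assoc, ← mul_assoc, ← ENNReal.ofReal_mul (by positivity)]
        congr 3
        field_simp

theorem nontrivial_of_infDist_pos {X : Type*} [PseudoMetricSpace X] {F : Set X} {x : X}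
    (hx : 0 < infDist x F) : Nontrivial X := by
  obtain ⟨z, hz⟩ : F.Nonempty := Set.nonempty_iff_ne_empty.2 fun hF ↦ by simp [hF] at hx
  refine nontrivial_of_ne x z ?_
  rintro rfl
  exact hx.ne' (infDist_zero_of_mem hz)

theorem measure_unitBall_mul_lintegral_enorm_rpow_le (hpos : ∀ᵐ x ∂μ, 0 < infDist x F)
    (hp : 1 ≤ p) (hε : 0 < ε) {L : NNReal} {u : E → ℝ} (hu : LipschitzWith L u)
    (hu_supp : Bornology.IsBounded (Function.support u)) :
    μ (ball 0 1) * ∫⁻ x, ‖u x‖ₑ ^ p * ENNReal.ofReal (infDist x F ^ (β - p)) ∂μ ≤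
      ENNReal.ofReal (1 / ε) ^ (p - 1) * ∫⁻ s in Set.Ioi (0 : ℝ),
        ENNReal.ofReal ((1 + s) ^ ((1 + ε) * (p - 1))) * ∫⁻ x, ∫⁻ v in ball 0 1,
          ENNReal.ofReal (infDist x F ^ β) *
            ‖fderiv ℝ u (x + (s * infDist x F) • v)‖ₑ ^ p ∂μ ∂μ := by
  let w : ℝ → ℝ≥0∞ := fun s ↦ ENNReal.ofReal ((1 + s) ^ ((1 + ε) * (p - 1)))
  let average : E → E → ℝ → ℝ≥0∞ := fun x v s ↦
    ENNReal.ofReal (infDist x F ^ β) * ‖fderiv ℝ u (x + (s * infDist x F) • v)‖ₑ ^ p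
  have const_ne_top : ENNReal.ofReal (1 / ε) ^ (p - 1) ≠ ∞ :=
    ENNReal.rpow_ne_top_of_nonneg (by linarith) ENNReal.ofReal_ne_top
  calc μ (ball 0 1) * ∫⁻ x, ‖u x‖ₑ ^ p * ENNReal.ofReal (infDist x F ^ (β - p)) ∂μ
      ≤ ENNReal.ofReal (1 / ε) ^ (p - 1) *
          ∫⁻ x, ∫⁻ v in ball 0 1, (∫⁻ s in Set.Ioi (0 : ℝ), w s * average x v s) ∂μ ∂μ := by
        rw [← lintegral_const_mul' _ _ measure_ball_lt_top.ne,
          ← lintegral_const_mul' _ _ const_ne_top]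
        refine lintegral_mono_ae ?_
        filter_upwards [hpos] with x hx
        have := nontrivial_of_infDist_pos hx
        exact measure_unitBall_mul_enorm_rpow_le hp hε hu hu_supp x hx β
    _ = _ := by
        rw [lintegral_lintegral_lintegral_rotate (by fun_prop)]
        simp only [lintegral_const_mul' _ _ ENNReal.ofReal_ne_top, w, average]

theorem AssouadCodimBound.lintegral_enorm_rpow_mul_le (h : AssouadCodimBound μ F t C)
    (hF : F.Nonempty) (hp : 1 ≤ p) (hβ : β < 0) (ht : p - β < t) {L : NNReal} {u : E → ℝ}
    (hu : LipschitzWith L u) (hu_supp : Bornology.IsBounded (Function.support u)) :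
    ∫⁻ x, ‖u x‖ₑ ^ p * ENNReal.ofReal (infDist x F ^ (β - p)) ∂μ ≤
      ENNReal.ofReal ((p / (t + β - p)) ^ p * shadowConst dim t C β) *
        ∫⁻ y, ‖fderiv ℝ u y‖ₑ ^ p * ENNReal.ofReal (infDist y F ^ β) ∂μ := by
  have const_pos : 0 < shadowConst dim t C β := shadowConst_pos (h.const_pos hF) hβ
  set energy := ∫⁻ y, ‖fderiv ℝ u y‖ₑ ^ p * ENNReal.ofReal (infDist y F ^ β) ∂μ
  set ε := (t + β - p) / p with hε_def
  have hε : 0 < ε := div_pos (by linarith) (by linarith)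
  have exponent : (1 + ε) * (p - 1) + (-t - β) = -1 - ε := by rw [hε_def]; field_simp; ring
  have ball_ne_zero : μ (ball 0 1) ≠ 0 := (measure_ball_pos μ 0 one_pos).ne'
  rw [← ENNReal.mul_le_mul_iff_right ball_ne_zero measure_ball_lt_top.ne]
  calc μ (ball 0 1) * ∫⁻ x, ‖u x‖ₑ ^ p * ENNReal.ofReal (infDist x F ^ (β - p)) ∂μ
      ≤ _ := measure_unitBall_mul_lintegral_enorm_rpow_le
          (h.ae_infDist_pos (by linarith) hF) hp hε hu hu_supp
    _ ≤ ENNReal.ofReal (1 / ε) ^ (p - 1) * ∫⁻ s in Set.Ioi (0 : ℝ),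
          ENNReal.ofReal ((1 + s) ^ (-1 - ε)) *
            (ENNReal.ofReal (shadowConst dim t C β) * μ (ball 0 1) * energy) := by
        gcongr _ * ?_
        refine setLIntegral_mono' measurableSet_Ioi fun s (hs : 0 < s) ↦ ?_
        refine (mul_le_mul_right (h.lintegral_unitBall_average_le hF hβ (by linarith) hs
          ((measurable_fderiv ℝ u).enorm.pow_const p)) _).trans_eq ?_
        rw [← exponent, Real.rpow_add (by positivity), ENNReal.ofReal_mul (by positivity),
          ENNReal.ofReal_mul (by positivity)]
        ring
    _ = ENNReal.ofReal (1 / ε) ^ (p - 1 + 1) *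
          (ENNReal.ofReal (shadowConst dim t C β) * μ (ball 0 1) * energy) := by
        rw [lintegral_mul_const _ (by fun_prop), lintegral_Ioi_one_add_rpow hε, ← mul_assoc,
          ENNReal.rpow_add_of_nonneg _ _ (by linarith) zero_le_one, ENNReal.rpow_one]
    _ = _ := by
        rw [sub_add_cancel, ENNReal.ofReal_rpow_of_pos (by positivity), one_div_div,
          ENNReal.ofReal_mul (Real.rpow_nonneg (div_nonneg (by linarith) (by linarith)) _)]
        ring

theorem AssouadCodimBound.hardyInequality (h : AssouadCodimBound μ Ωᶜ t C) (hΩ : Ωᶜ.Nonempty)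
    (hp : 1 ≤ p) (hβ : β < 0) (ht : p - β < t) :
    HardyInequality μ Ω p β ((p / (t + β - p)) ^ p * shadowConst dim t C β) := by
  rintro u ⟨L, hu⟩ hb
  have ae_mem : ∀ᵐ x ∂μ, x ∈ Ω := by
    filter_upwards [h.ae_infDist_pos (by linarith) hΩ] with x hx
    exact Set.notMem_compl_iff.1 fun hx' ↦ hx.ne' (infDist_zero_of_mem hx')
  have hu_supp := isBounded_support_of_dense (Measure.dense_of_ae ae_mem) hu.continuous hb
  simp only [Measure.restrict_eq_self_of_ae_mem ae_mem, ← Real.norm_eq_abs,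
    ofReal_norm_rpow_mul (zero_le_one.trans hp)]
  exact h.lintegral_enorm_rpow_mul_le hΩ hp hβ ht hu hu_supp

theorem inv_one_sub_two_rpow_le (hβ_ge : -1 ≤ β) (hβ : β < 0) :
    (1 - (2 : ℝ) ^ β)⁻¹ ≤ 2 / |β| := by
  have bernoulli : (2 : ℝ) ^ β ≤ 1 + β / 2 := by
    have := rpow_one_add_le_one_add_mul_self (s := -1 / 2) (by norm_num) (p := -β)
      (by linarith) (by linarith)
    rw [show (1 : ℝ) + -1 / 2 = 2⁻¹ by norm_num, Real.inv_rpow zero_le_two,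
      Real.rpow_neg zero_le_two, inv_inv] at this
    linarith
  rw [abs_of_neg hβ, ← inv_div]
  exact inv_anti₀ (by linarith) (by linarith)

theorem AssouadCodimBound.hardyInequality_div_abs (h : AssouadCodimBound μ Ωᶜ t C)
    (hΩ : Ωᶜ.Nonempty) (hp : 1 ≤ p) (hβ_ge : -1 ≤ β) (hβ : β < 0) (ht : p - 2 * β ≤ t) :
    HardyInequality μ Ω p β
      ((p / ((t - p) / 2)) ^ p * ((12 ^ dim * C + 3 ^ dim * (3 / 2) ^ t) * 2) / |β|) := by
  have hC : 0 < C := h.const_pos hΩ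
  have gap_pos : 0 < (t - p) / 2 := by linarith
  have gap_le : (t - p) / 2 ≤ t + β - p := by linarith
  refine (h.hardyInequality hΩ hp hβ (by linarith)).mono ?_
  calc (p / (t + β - p)) ^ p * shadowConst dim t C β
      ≤ (p / ((t - p) / 2)) ^ p * ((12 ^ dim * C + 3 ^ dim * (3 / 2) ^ t) * (2 / |β|)) := by
        rw [shadowConst, div_eq_mul_inv _ (1 - (2 : ℝ) ^ β)]
        gcongr
        · exact mul_nonneg (by positivity) (inv_nonneg.2 (one_sub_two_rpow_pos hβ).le)
        · exact div_nonneg (by linarith) (by linarith)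
        · exact inv_one_sub_two_rpow_le hβ_ge hβ
    _ = _ := by ring

theorem hardy_neg_beta_of_lower_assouad_codim_gt_general (hΩ : Ωᶜ.Nonempty) (hp : 1 ≤ p)
    (h : AssouadCodimBound μ Ωᶜ t C) :
    (∀ β < 0, p - β < t → ∃ C' > 0, HardyInequality μ Ω p β C') ∧
    (p < t → ∃ βt < 0, ∃ Cstar > 0, ∀ β, βt < β → β < 0 →
      HardyInequality μ Ω p β (Cstar / |β|)) := by
  have hC : 0 < C := h.const_pos hΩ
  refine ⟨fun β hβ ht ↦ ⟨_, ?_, h.hardyInequality hΩ hp hβ ht⟩, fun ht ↦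
    ⟨max (-1) (-((t - p) / 2)), max_lt neg_one_lt_zero (by linarith), _, ?_, fun β hβt hβ ↦
      h.hardyInequality_div_abs hΩ hp ((le_max_left _ _).trans hβt.le) hβ ?_⟩⟩
  · have := shadowConst_pos (n := dim) (t := t) hC hβ
    have : 0 < t + β - p := by linarith
    positivity
  · have : 0 < t - p := by linarith
    positivity
  · linarith [(le_max_right _ _).trans hβt.le]

end Hardy

/-- Euclidean case of Proposition 3.1: for `β < 0` and
`lcodima(Ωᶜ) > p - β`, the `(p,β)`-Hardy inequality holds for all Lipschitz functions
with bounded support in `Ω` (not required to vanish on `Ωᶜ`).  Moreover, if the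
neighborhood bound holds with an exponent `t > p`, then there are `β̃ < 0` and `C* > 0`
such that for all `β' ∈ (β̃, 0)` the inequality holds with constant `C*/|β'|`. -/
theorem hardy_neg_beta_of_lower_assouad_codim_gt
    (n : ℕ) (hn : 1 ≤ n) (p β : ℝ) (hp : 1 ≤ p) (hβ : β < 0)
    (Ω : Set (EuclideanSpace ℝ (Fin n))) (hΩopen : IsOpen Ω) (hΩc : Ωᶜ.Nonempty)
    (t C_A : ℝ) (ht : p - β < t) (hCA : 1 ≤ C_A)
    (hthin : ∀ x ∈ Ωᶜ, ∀ r R : ℝ, 0 < r → r < R →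
      volume (Metric.thickening r Ωᶜ ∩ Metric.closedBall x R) ≤
        ENNReal.ofReal (C_A * (r / R) ^ t) * volume (Metric.closedBall x R)) :
    (∃ C : ℝ, 0 < C ∧ ∀ u : EuclideanSpace ℝ (Fin n) → ℝ,
      (∃ L : NNReal, LipschitzWith L u) → Bornology.IsBounded {x ∈ Ω | u x ≠ 0} →
      ∫⁻ x in Ω, ENNReal.ofReal (|u x| ^ p * Metric.infDist x Ωᶜ ^ (β - p)) ≤
        ENNReal.ofReal C *
          ∫⁻ x in Ω, ENNReal.ofReal (‖fderiv ℝ u x‖ ^ p * Metric.infDist x Ωᶜ ^ β)) ∧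
    (p < t → ∃ βt : ℝ, βt < 0 ∧ ∃ Cstar : ℝ, 0 < Cstar ∧
      ∀ β' : ℝ, βt < β' → β' < 0 →
        ∀ u : EuclideanSpace ℝ (Fin n) → ℝ,
          (∃ L : NNReal, LipschitzWith L u) → Bornology.IsBounded {x ∈ Ω | u x ≠ 0} →
          ∫⁻ x in Ω, ENNReal.ofReal (|u x| ^ p * Metric.infDist x Ωᶜ ^ (β' - p)) ≤
            ENNReal.ofReal (Cstar / |β'|) *
              ∫⁻ x in Ω, ENNReal.ofReal (‖fderiv ℝ u x‖ ^ p * Metric.infDist x Ωᶜ ^ β')) := by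
  have ⟨inequality, asymptotics⟩ := hardy_neg_beta_of_lower_assouad_codim_gt_general hΩc hp hthin
  exact ⟨inequality β hβ ht, asymptotics⟩
end
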